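/- arXiv:0901.0231 — 2 statements merged into one kernel-verified Lean document; each statement's English description precedes it below -/
import Mathlib

section
/- Let P = conv(V) ⊆ ℝ^N and P' = conv(V') ⊆ ℝ^{N'} be polytopes whose vertex sets have the same oriented matroid via a bijection φ : V → V'. Then for every subset M ⊆ V, the affine hull of M is a split hyperplane of P if and only if the affine hull of φ(M) is a split hyperplane of P'. Moreover, if M₁, M₂ ⊆ V are subsets whose affine hulls are split hyperplanes of P, then aff(M₁) ∩ aff(M₂) ∩ relint(P) = ∅ if and only if aff(φ(M₁)) ∩ aff(φ(M₂)) ∩ relint(P') = ∅; that is, the corresponding splits of P are compatible exactly when the corresponding splits of P' are. -/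
open scoped BigOperators

noncomputable section

namespace TSP

/-- `ℝ^N` with the Euclidean norm. -/
abbrev E (N : ℕ) : Type := EuclideanSpace ℝ (Fin N)

/-- The dimension of the affine hull of a set. -/
def adim {N : ℕ} (S : Set (E N)) : ℕ := Module.finrank ℝ (affineSpan ℝ S).direction

/-- `V` is the vertex set of the polytope `conv V`:  `V` is finite, nonempty and coincides
with the set of extreme points of its convex hull. -/
def IsPolytope {N : ℕ} (V : Set (E N)) : Prop :=
  V.Finite ∧ V.Nonempty ∧ V = Set.extremePoints ℝ (convexHull ℝ V)

/-- `F` is a face of the polytope with vertex set `V`: the set of maximizers over the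
polytope of some affine functional. -/
def IsFaceOf {N : ℕ} (V : Set (E N)) (F : Set (E N)) : Prop :=
  ∃ a : E N →ᵃ[ℝ] ℝ,
    F = {x | x ∈ convexHull ℝ V ∧ ∀ y ∈ convexHull ℝ V, a y ≤ a x}

/-- A facet is a face of dimension `dim P - 1`. -/
def IsFacetOf {N : ℕ} (V : Set (E N)) (F : Set (E N)) : Prop :=
  IsFaceOf V F ∧ adim F + 1 = adim V

/-- Two distinct vertices are joined by an edge if their segment is a (1-dimensional) face. -/
def IsEdge {N : ℕ} (V : Set (E N)) (u w : E N) : Prop :=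
  u ≠ w ∧ IsFaceOf V (convexHull ℝ {u, w})

/-- The neighbors of a vertex `v`: the vertices joined to `v` by an edge. -/
def neighbors {N : ℕ} (V : Set (E N)) (v : E N) : Set (E N) :=
  {w | w ∈ V ∧ IsEdge V v w}

/-- Two points lie strictly on opposite sides of the affine subspace `H`. -/
def StrictlySeparates {N : ℕ} (H : AffineSubspace ℝ (E N)) (u w : E N) : Prop :=
  u ∉ H ∧ w ∉ H ∧ (openSegment ℝ u w ∩ (H : Set (E N))).Nonempty

/-- A split hyperplane of the polytope with vertex set `V`: an affine subspace of
`aff V` of dimension `dim V - 1` which meets the relative interior of the polytope and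
does not separate the endpoints of any edge strictly. -/
def IsSplitHyperplane {N : ℕ} (V : Set (E N)) (H : AffineSubspace ℝ (E N)) : Prop :=
  H ≤ affineSpan ℝ V ∧
  Module.finrank ℝ H.direction + 1 = adim V ∧
  ((H : Set (E N)) ∩ intrinsicInterior ℝ (convexHull ℝ V)).Nonempty ∧
  ∀ u w : E N, IsEdge V u w → ¬ StrictlySeparates H u w

/-- A triangulation (without new vertices) of the polytope with vertex set `V`. -/
def IsTriangulation {N : ℕ} (V : Set (E N)) (Δ : Set (Set (E N))) : Prop :=
  Δ.Finite ∧
  (∀ S ∈ Δ, S ⊆ V ∧ S.ncard = adim V + 1 ∧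
    AffineIndependent ℝ (fun x : S => (x : E N))) ∧
  (⋃ S ∈ Δ, convexHull ℝ S) = convexHull ℝ V ∧
  (∀ S ∈ Δ, ∀ T ∈ Δ, convexHull ℝ S ∩ convexHull ℝ T = convexHull ℝ (S ∩ T))

/-- A regular triangulation: one induced by a lifting function `lam` on the vertices. -/
def IsRegularTriangulation {N : ℕ} (V : Set (E N)) (Δ : Set (Set (E N))) : Prop :=
  IsTriangulation V Δ ∧
  ∃ lam : E N → ℝ, ∀ S : Set (E N), S ⊆ V →
    (S ∈ Δ ↔ ∃ a : E N →ᵃ[ℝ] ℝ, (∀ v ∈ S, a v = lam v) ∧ ∀ v ∈ V \ S, a v < lam v)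

/-- The triangulation `Δ` is induced by splits: there is a set `𝒮` of split hyperplanes
such that the cells of `Δ` are precisely the closures of the connected components of the
relative interior of the polytope with the split hyperplanes removed. -/
def InducedBySplits {N : ℕ} (V : Set (E N)) (Δ : Set (Set (E N))) : Prop :=
  ∃ 𝒮 : Set (AffineSubspace ℝ (E N)), (∀ H ∈ 𝒮, IsSplitHyperplane V H) ∧
    convexHull ℝ '' Δ =
      {C : Set (E N) |
        ∃ x ∈ intrinsicInterior ℝ (convexHull ℝ V) \ ⋃ H ∈ 𝒮, (H : Set (E N)),
          C = closure (connectedComponentIn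
            (intrinsicInterior ℝ (convexHull ℝ V) \ ⋃ H ∈ 𝒮, (H : Set (E N))) x)}

/-- A polytope is totally splittable if each of its regular triangulations is induced
by splits. -/
def TotallySplittable {N : ℕ} (V : Set (E N)) : Prop :=
  ∀ Δ : Set (Set (E N)), IsRegularTriangulation V Δ → InducedBySplits V Δ

/-- One half of the "same oriented matroid" relation: every affine dependence on `V`
has a sign-matching affine dependence on `V'` (via the map `φ`). -/
def OMMap {N M : ℕ} (V : Set (E N)) (V' : Set (E M)) (φ : E N → E M) : Prop :=
  ∀ lam : E N → ℝ, (∀ v, v ∉ V → lam v = 0) →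
    (∑ᶠ v : E N, lam v) = 0 → (∑ᶠ v : E N, lam v • v) = 0 →
    ∃ mu : E M → ℝ, (∀ u, u ∉ V' → mu u = 0) ∧
      (∑ᶠ u : E M, mu u) = 0 ∧ (∑ᶠ u : E M, mu u • u) = 0 ∧
      ∀ v ∈ V, Real.sign (mu (φ v)) = Real.sign (lam v)

/-- Two finite point sets have the same oriented matroid. -/
def SameOrientedMatroid {N M : ℕ} (V : Set (E N)) (V' : Set (E M)) : Prop :=
  ∃ (φ : E N → E M) (ψ : E M → E N),
    Set.BijOn φ V V' ∧ (∀ v ∈ V, ψ (φ v) = v) ∧ (∀ u ∈ V', φ (ψ u) = u) ∧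
    OMMap V V' φ ∧ OMMap V' V ψ

/-- Two nonempty point sets with skew affine hulls. -/
def IsJoinPartition {N : ℕ} (V₁ V₂ : Set (E N)) : Prop :=
  V₁.Nonempty ∧ V₂.Nonempty ∧
  ((affineSpan ℝ V₁ : Set (E N)) ∩ (affineSpan ℝ V₂ : Set (E N))) = ∅ ∧
  adim (V₁ ∪ V₂) = adim V₁ + adim V₂ + 1

/-- The polytope with vertex set `V` is a join. -/
def IsJoin {N : ℕ} (V : Set (E N)) : Prop :=
  ∃ V₁ V₂ : Set (E N), V₁ ∪ V₂ = V ∧ Disjoint V₁ V₂ ∧ IsJoinPartition V₁ V₂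

/-- The polytope with vertex set `V` is a pyramid. -/
def IsPyramid {N : ℕ} (V : Set (E N)) : Prop :=
  ∃ (v : E N) (V₂ : Set (E N)), {v} ∪ V₂ = V ∧ v ∉ V₂ ∧ IsJoinPartition {v} V₂

/-- `v^⊥`: the affine span of the neighbors of the vertex `v`. -/
def vperp {N : ℕ} (V : Set (E N)) (v : E N) : AffineSubspace ℝ (E N) :=
  affineSpan ℝ (neighbors V v)

/-- The polytope with vertex set `V` admits a vertex split at `v`: the neighbors of `v`
span an affine subspace of dimension `dim V - 1` strictly separating `v` from all the
remaining vertices. -/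
def AdmitsVertexSplit {N : ℕ} (V : Set (E N)) (v : E N) : Prop :=
  Module.finrank ℝ (vperp V v).direction + 1 = adim V ∧
  ∃ a : E N →ᵃ[ℝ] ℝ, (∀ x ∈ neighbors V v, a x = 0) ∧ a v < 0 ∧
    ∀ w ∈ V, w ≠ v → w ∉ neighbors V v → 0 < a w

/-- The vertex set of the regular `d`-dimensional crosspolytope `conv {±e₁, …, ±e_d}`. -/
def crossVertices (d : ℕ) : Set (E d) :=
  {x | ∃ i : Fin d, x = EuclideanSpace.single i (1 : ℝ) ∨
        x = -EuclideanSpace.single i (1 : ℝ)}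

/-- The vertex set of the prism over a `(d-1)`-simplex:
`conv {e₁, …, e_d, f₁, …, f_d}` with `f_k = -∑_{i ≠ k} e_i`. -/
def simplexPrismVertices (d : ℕ) : Set (E d) :=
  {x | ∃ k : Fin d, x = EuclideanSpace.single k (1 : ℝ) ∨
        x = -∑ i ∈ Finset.univ.erase k, EuclideanSpace.single i (1 : ℝ)}

/-- `v` is almost beyond the facet `F` of the polytope with vertex set `V`. -/
def AlmostBeyond {N : ℕ} (V : Set (E N)) (F : Set (E N)) (v : E N) : Prop :=
  IsFacetOf V F ∧ v ∉ convexHull ℝ V ∧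
  (∃ a : E N →ᵃ[ℝ] ℝ, (∀ x ∈ F, a x = 0) ∧ (∀ x ∈ convexHull ℝ V, a x ≤ 0) ∧ 0 < a v) ∧
  (∀ F' : Set (E N), IsFacetOf V F' → F' ≠ F →
    ∀ a : E N →ᵃ[ℝ] ℝ, (∀ x ∈ F', a x = 0) → (∀ x ∈ convexHull ℝ V, a x ≤ 0) → a v ≤ 0)

/-- `g` (the rows of an `n × (n-d-1)` matrix of full rank `n-d-1`) is a Gale dual of the
polytope with vertices `v 0, …, v (n-1)` in `ℝ^d`. -/
def IsGaleDual {d n : ℕ} (v : Fin n → E d) (g : Fin n → E (n - d - 1)) : Prop :=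
  Submodule.span ℝ (Set.range g) = ⊤ ∧
  (∀ c : Fin (n - d - 1), (∑ i, g i c) = 0) ∧
  (∀ c : Fin (n - d - 1), (∑ i, g i c • v i) = 0)

/-- Radial projection to the unit sphere. -/
def sph {m : ℕ} (x : E m) : E m := ‖x‖⁻¹ • x

/-- The `i`-th point of the spherical Gale diagram is a double point. -/
def IsDouble {m n : ℕ} (g : Fin n → E m) (i : Fin n) : Prop :=
  ∃ j : Fin n, j ≠ i ∧ sph (g j) = sph (g i)

/-- The `i`-th point of the spherical Gale diagram is antipodal. -/
def IsAnti {m n : ℕ} (g : Fin n → E m) (i : Fin n) : Prop :=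
  ∃ j : Fin n, sph (g j) = -sph (g i)

/-- The class of model totally splittable polytopes: simplices, polygons, regular
crosspolytopes, prisms over simplices, and iterated joins of these. -/
inductive TSModel : (M : ℕ) → Set (E M) → Prop
  | simplex {M : ℕ} (V : Set (E M)) (h : IsPolytope V)
      (ha : AffineIndependent ℝ (fun x : V => (x : E M))) : TSModel M V
  | polygon {M : ℕ} (V : Set (E M)) (h : IsPolytope V) (hd : adim V = 2) : TSModel M V
  | cross {M d : ℕ} (hd : 1 ≤ d) (f : E d →ᵃⁱ[ℝ] E M) : TSModel M (f '' crossVertices d)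
  | prism {M d : ℕ} (hd : 2 ≤ d) (f : E d →ᵃⁱ[ℝ] E M) :
      TSModel M (f '' simplexPrismVertices d)
  | join {M : ℕ} (V₁ V₂ : Set (E M)) (h₁ : TSModel M V₁) (h₂ : TSModel M V₂)
      (hdisj : Disjoint V₁ V₂) (hskew : IsJoinPartition V₁ V₂) : TSModel M (V₁ ∪ V₂)

/-!
Index both vertex sets by one finite type `ι`, giving configurations `p` and `q` whose affine
dependences have the same sign patterns; everything that decides whether a set of vertices spans a
split hyperplane can be read off these sign vectors. Membership of a vertex in an affine hull, a
segment crossing an affine hull and an affine hull meeting the relative interior all ask for two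
systems of weights with the same barycentre, one of them positive on a prescribed set, and the
difference of the two is an affine dependence with a prescribed sign pattern. Dimensions are
determined by the affinely independent subfamilies. Separating a convex hull from an affine hull
shows that a set of vertices spans a face exactly when no affine dependence is nonnegative and
nonzero outside it, which identifies the edges.

For compatibility, three systems of weights with a common barycentre occur, and the sign vectors of
their differences have to be combined. This is possible when the affine hulls are replaced by convex
hulls of vertices. Since a split hyperplane `H` cuts no edge, each extreme point of `H ∩ P` is a
vertex of `P`: the smallest face containing it meets `H` in this point only, so it is a vertex or an
edge. By Krein–Milman, `H ∩ P` is the convex hull of the vertices of `P` on `H`.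
-/

/-! ### Barycentric weights and affine dependences -/

section Weights

variable {ι X : Type*} [Fintype ι] [AddCommGroup X] [Module ℝ X] {p : ι → X} {x : X}

/-- The linear map of the homogenized configuration `i ↦ (1, p i)`. Weights `w` with value
`(1, x)` are barycentric weights of `x`, and its kernel consists of the affine dependences of
`p`. -/
def homogenization (p : ι → X) : (ι → ℝ) →ₗ[ℝ] ℝ × X :=
  Fintype.linearCombination ℝ fun i => ((1 : ℝ), p i)

lemma homogenization_apply (p : ι → X) (w : ι → ℝ) :
    homogenization p w = (∑ i, w i, ∑ i, w i • p i) := by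
  simp [homogenization, Fintype.linearCombination_apply, Prod.ext_iff, Prod.fst_sum, Prod.snd_sum]

lemma homogenization_eq_iff {w : ι → ℝ} {t : ℝ} :
    homogenization p w = (t, x) ↔ ∑ i, w i = t ∧ ∑ i, w i • p i = x := by
  rw [homogenization_apply, Prod.mk.injEq]

lemma homogenization_inv_smul {w : ι → ℝ} (hw : ∑ i, w i ≠ 0) :
    homogenization p ((∑ i, w i)⁻¹ • w) = (1, (∑ i, w i)⁻¹ • ∑ i, w i • p i) := by
  rw [map_smul, homogenization_apply, Prod.smul_mk, smul_eq_mul, inv_mul_cancel₀ hw]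

lemma homogenization_add_of_mem_ker {ν : ι → ℝ} (hν : ν ∈ LinearMap.ker (homogenization p))
    (w : ι → ℝ) : homogenization p (w + ν) = homogenization p w := by
  rw [map_add, LinearMap.mem_ker.1 hν, add_zero]

lemma eq_apply_of_homogenization_eq {w : ι → ℝ} {i : ι} (hw0 : ∀ k ≠ i, w k = 0)
    (hwx : homogenization p w = (1, x)) : x = p i := by
  obtain ⟨hsum, rfl⟩ := homogenization_eq_iff.1 hwx
  rw [Fintype.sum_eq_single i hw0] at hsum
  rw [Fintype.sum_eq_single i fun k hk => by rw [hw0 k hk, zero_smul], hsum, one_smul]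

lemma mem_openSegment_of_homogenization_eq {w : ι → ℝ} {i j : ι} (hij : i ≠ j) (hi : 0 < w i)
    (hj : 0 < w j) (hw0 : ∀ k, k ≠ i ∧ k ≠ j → w k = 0) (hwx : homogenization p w = (1, x)) :
    x ∈ openSegment ℝ (p i) (p j) := by
  obtain ⟨hsum, hwx⟩ := homogenization_eq_iff.1 hwx
  rw [Fintype.sum_eq_add i j hij hw0] at hsum
  rw [Fintype.sum_eq_add i j hij fun k hk => by rw [hw0 k hk, zero_smul]] at hwx
  exact ⟨w i, w j, hi, hj, hsum, hwx⟩

lemma sum_mul_affineMap_eq (a : X →ᵃ[ℝ] ℝ) (p : ι → X) (w : ι → ℝ) :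
    ∑ i, w i * a (p i) = a.linear (∑ i, w i • p i) + (∑ i, w i) * a 0 := by
  simp only [map_sum, map_smul, smul_eq_mul, Finset.sum_mul, ← Finset.sum_add_distrib,
    ← mul_add]
  refine Finset.sum_congr rfl fun i _ => ?_
  rw [congrFun a.decomp (p i), Pi.add_apply]

lemma mem_affineSpan_image_iff {M : Set ι} :
    x ∈ affineSpan ℝ (p '' M) ↔
      ∃ w : ι → ℝ, (∀ i ∉ M, w i = 0) ∧ homogenization p w = (1, x) := by
  classical
  simp only [homogenization_eq_iff]
  constructor
  · intro hx
    obtain ⟨s, w, hsM, hw, rfl⟩ := eq_affineCombination_of_mem_affineSpan_image hx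
    refine ⟨fun i => if i ∈ s then w i else 0, fun i hi => if_neg fun h => hi (hsM h), ?_, ?_⟩
    · simpa using hw
    · simp [Finset.affineCombination_eq_linear_combination _ _ _ hw, ite_smul]
  · rintro ⟨w, hw, hw1, rfl⟩
    rw [← Finset.univ.affineCombination_eq_linear_combination p w hw1]
    exact affineCombination_mem_affineSpan_image hw1 (fun i _ hi => hw i hi) p

lemma mem_convexHull_image_iff {M : Set ι} :
    x ∈ convexHull ℝ (p '' M) ↔
      ∃ w : ι → ℝ, 0 ≤ w ∧ (∀ i ∉ M, w i = 0) ∧ homogenization p w = (1, x) := by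
  classical
  simp only [homogenization_eq_iff]
  constructor
  · intro hx
    refine convexHull_min (s := p '' M)
      (t := {x | ∃ w : ι → ℝ, 0 ≤ w ∧ (∀ i ∉ M, w i = 0) ∧ ∑ i, w i = 1 ∧ ∑ i, w i • p i = x})
      ?_ ?_ hx
    · rintro _ ⟨i, hi, rfl⟩
      refine ⟨Pi.single i 1, Pi.single_nonneg.2 zero_le_one, fun j hj => ?_, by simp, ?_⟩
      · exact Pi.single_eq_of_ne (ne_of_mem_of_not_mem hi hj).symm 1
      · simp [Pi.single_apply, ite_smul]
    · rintro _ ⟨v, hv, hvM, hv1, rfl⟩ _ ⟨w, hw, hwM, hw1, rfl⟩ a b ha hb hab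
      refine ⟨a • v + b • w, by positivity, fun i hi => by simp [hvM i hi, hwM i hi], ?_, ?_⟩
      · simp [Finset.sum_add_distrib, ← Finset.mul_sum, hv1, hw1, hab]
      · simp [add_smul, mul_smul, Finset.sum_add_distrib, Finset.smul_sum]
  · rintro ⟨w, hw, hwM, hw1, rfl⟩
    rw [← Finset.sum_subset (Finset.subset_univ {i | i ∈ M}) fun i _ hi => by
      rw [hwM i (by simpa using hi), zero_smul]]
    refine (convex_convexHull ℝ _).sum_mem (fun i _ => hw i) ?_ fun i hi =>
      subset_convexHull ℝ _ ⟨i, by simpa using hi, rfl⟩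
    rw [← hw1]
    exact Finset.sum_subset (Finset.subset_univ _) fun i _ hi => hwM i (by simpa using hi)

lemma mem_convexHull_range_iff :
    x ∈ convexHull ℝ (Set.range p) ↔
      ∃ w : ι → ℝ, 0 ≤ w ∧ homogenization p w = (1, x) := by
  simp [← Set.image_univ, mem_convexHull_image_iff]

end Weights

section Perturbation

variable {ι : Type*} [Finite ι]

lemma exists_pos_perturbation (w ν : ι → ℝ) :
    ∃ ε > 0, ∀ c : ℝ, |c| ≤ ε → ∀ i, 0 < w i → 0 < w i + c * ν i := by
  have h : ∀ᶠ c : ℝ in nhds 0, ∀ i, 0 < w i → 0 < w i + c * ν i := by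
    refine Filter.eventually_all.2 fun i => ?_
    by_cases hi : 0 < w i
    · have hc : ContinuousAt (fun c : ℝ => w i + c * ν i) 0 := by fun_prop
      filter_upwards [hc.eventually_const_lt (by simpa using hi)] with c h _ using h
    · exact Filter.Eventually.of_forall fun c h => absurd h hi
  obtain ⟨ε, hε, hsub⟩ := Metric.nhds_basis_closedBall.eventually_iff.1 h
  exact ⟨ε, hε, fun c hc => hsub (by simpa using hc)⟩

lemma exists_forall_pos_add_smul {w ν : ι → ℝ} (hw : 0 ≤ w) (hν : ∀ i, w i = 0 → 0 < ν i) :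
    ∃ ε : ℝ, ∀ i, 0 < (w + ε • ν) i := by
  obtain ⟨ε, hε, hpert⟩ := exists_pos_perturbation w ν
  refine ⟨ε, fun i => ?_⟩
  rcases (hw i).eq_or_lt' with hi | hi
  · simpa [hi] using mul_pos hε (hν i hi)
  · exact hpert ε (abs_of_pos hε).le i hi

end Perturbation

/-! ### Relative interiors of convex sets -/

section RelativeInterior

variable {X : Type*} [NormedAddCommGroup X] [NormedSpace ℝ X] {C : Set X} {x y : X}

lemma mem_intrinsicInterior_iff_mem_nhdsWithin :
    x ∈ intrinsicInterior ℝ C ↔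
      x ∈ affineSpan ℝ C ∧ C ∈ nhdsWithin x (affineSpan ℝ C : Set X) := by
  rw [mem_intrinsicInterior]
  constructor
  · rintro ⟨y, hy, rfl⟩
    exact ⟨y.2, preimage_coe_mem_nhds_subtype.1 (mem_interior_iff_mem_nhds.1 hy)⟩
  · rintro ⟨hx, hC⟩
    exact ⟨⟨x, hx⟩, mem_interior_iff_mem_nhds.2 (preimage_coe_mem_nhds_subtype.2 hC), rfl⟩

lemma exists_prolongation_mem_of_mem_intrinsicInterior (hx : x ∈ intrinsicInterior ℝ C)
    (hy : y ∈ C) : ∃ δ > (0 : ℝ), x + δ • (x - y) ∈ C := by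
  obtain ⟨hxA, hC⟩ := mem_intrinsicInterior_iff_mem_nhdsWithin.1 hx
  have hcont : Continuous fun δ : ℝ => x + δ • (x - y) := by fun_prop
  have hmem (δ : ℝ) : x + δ • (x - y) ∈ affineSpan ℝ C := by
    simpa [add_comm] using
      (affineSpan ℝ C).smul_vsub_vadd_mem δ hxA (subset_affineSpan ℝ C hy) hxA
  have htendsto : Filter.Tendsto (fun δ : ℝ => x + δ • (x - y)) (nhdsWithin 0 (Set.Ioi 0))
      (nhdsWithin x (affineSpan ℝ C : Set X)) :=
    tendsto_nhdsWithin_iff.2 ⟨(hcont.tendsto' 0 x (by simp)).mono_left nhdsWithin_le_nhds,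
      Filter.Eventually.of_forall hmem⟩
  obtain ⟨δ, hδC, hδ⟩ := ((htendsto.eventually_mem hC).and self_mem_nhdsWithin).exists
  exact ⟨δ, hδ, hδC⟩

-- The homothety centred at `x + δ • (x - y)` that moves `y` to `x` maps `C` into itself.
lemma mem_intrinsicInterior_of_prolongation_mem (hC : Convex ℝ C) (hx : x ∈ C)
    (hy : y ∈ intrinsicInterior ℝ C) {δ : ℝ} (hδ : 0 < δ) (hz : x + δ • (x - y) ∈ C) :
    x ∈ intrinsicInterior ℝ C := by
  obtain ⟨hyA, hyC⟩ := mem_intrinsicInterior_iff_mem_nhdsWithin.1 hy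
  have hxA := subset_affineSpan ℝ C hx
  refine mem_intrinsicInterior_iff_mem_nhdsWithin.2 ⟨hxA, ?_⟩
  let g : X → X := fun u => y + ((1 + δ) / δ) • (u - x)
  have hcont : Continuous g := by fun_prop
  have hg : Filter.Tendsto g (nhdsWithin x (affineSpan ℝ C : Set X))
      (nhdsWithin y (affineSpan ℝ C : Set X)) := by
    refine tendsto_nhdsWithin_iff.2
      ⟨(hcont.tendsto' x y (by simp [g])).mono_left nhdsWithin_le_nhds, ?_⟩
    filter_upwards [self_mem_nhdsWithin] with u hu
    simpa [g, add_comm] using (affineSpan ℝ C).smul_vsub_vadd_mem ((1 + δ) / δ) hu hxA hyA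
  filter_upwards [hg.eventually_mem hyC] with u hu
  have hcomb : u = (δ / (1 + δ)) • g u + (1 / (1 + δ)) • (x + δ • (x - y)) := by
    simp only [g]
    match_scalars <;> field_simp <;> ring
  rw [hcomb]
  exact hC hu hz (by positivity) (by positivity) (by field_simp; ring)

variable {ι : Type*} [Fintype ι] [FiniteDimensional ℝ X] {p : ι → X}

lemma mem_intrinsicInterior_convexHull_range_iff [Nonempty ι] :
    x ∈ intrinsicInterior ℝ (convexHull ℝ (Set.range p)) ↔
      ∃ w : ι → ℝ, (∀ i, 0 < w i) ∧ homogenization p w = (1, x) := by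
  constructor
  · intro hx
    let b : ι → ℝ := fun _ => (Fintype.card ι : ℝ)⁻¹
    obtain ⟨y, hb⟩ : ∃ y, homogenization p b = (1, y) :=
      ⟨_, homogenization_eq_iff.2 ⟨by simp [b], rfl⟩⟩
    have hb0 (i : ι) : 0 < b i := by positivity
    have hy := mem_convexHull_range_iff.2 ⟨b, fun i => (hb0 i).le, hb⟩
    obtain ⟨δ, hδ, hz⟩ := exists_prolongation_mem_of_mem_intrinsicInterior hx hy
    obtain ⟨v, hv0, hv⟩ := mem_convexHull_range_iff.1 hz
    refine ⟨(1 + δ)⁻¹ • (v + δ • b), fun i => ?_, ?_⟩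
    · exact mul_pos (by positivity) (add_pos_of_nonneg_of_pos (hv0 i) (mul_pos hδ (hb0 i)))
    · rw [map_smul, map_add, map_smul, hv, hb, Prod.smul_mk, Prod.mk_add_mk, Prod.smul_mk,
        Prod.mk.injEq]
      constructor
      · rw [smul_eq_mul, smul_eq_mul, mul_one, inv_mul_cancel₀ (by positivity)]
      · match_scalars <;> field_simp
        ring
  · rintro ⟨w, hw0, hw⟩
    have hx := mem_convexHull_range_iff.2 ⟨w, fun i => (hw0 i).le, hw⟩
    obtain ⟨y, hy⟩ := Set.Nonempty.intrinsicInterior (convex_convexHull ℝ (Set.range p)) ⟨x, hx⟩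
    obtain ⟨v, -, hv⟩ := mem_convexHull_range_iff.1 (intrinsicInterior_subset hy)
    obtain ⟨ε, hε, hpos⟩ := exists_pos_perturbation w (w - v)
    refine mem_intrinsicInterior_of_prolongation_mem (convex_convexHull ℝ _) hx hy hε ?_
    refine mem_convexHull_range_iff.2
      ⟨w + ε • (w - v), fun i => (hpos ε (abs_of_pos hε).le i (hw0 i)).le, ?_⟩
    simp [hw, hv]

end RelativeInterior

/-! ### Sign vectors -/

section SignVectors

variable {ι X : Type*} [Fintype ι]

section Module

variable [AddCommGroup X] [Module ℝ X] {p : ι → X} {J M : Set ι}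

/-- The vectors of the oriented matroid of the configuration `p`: the sign patterns of its affine
dependences. -/
def signVectors (p : ι → X) : Set (ι → SignType) :=
  (fun ν i => SignType.sign (ν i)) '' (LinearMap.ker (homogenization p) : Set (ι → ℝ))

lemma exists_pos_weights_mem_affineSpan_iff (hJ : J.Nonempty) :
    (∃ x ∈ affineSpan ℝ (p '' M), ∃ w : ι → ℝ,
        (∀ i ∈ J, 0 < w i) ∧ (∀ i ∉ J, w i = 0) ∧ homogenization p w = (1, x)) ↔
      ∃ σ ∈ signVectors p, (∀ i ∈ J \ M, σ i = 1) ∧ ∀ i ∉ J ∪ M, σ i = 0 := by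
  classical
  simp only [signVectors, Set.exists_mem_image, sign_eq_one_iff, sign_eq_zero_iff]
  constructor
  · rintro ⟨x, hx, w, hw, hw0, hwx⟩
    obtain ⟨u, hu0, hux⟩ := mem_affineSpan_image_iff.1 hx
    refine ⟨w - u, by simp [hwx, hux], fun i hi => ?_, fun i hi => ?_⟩
    · simpa [hu0 i hi.2] using hw i hi.1
    · rw [Set.mem_union, not_or] at hi
      simp [hw0 i hi.1, hu0 i hi.2]
  · rintro ⟨ν, hν, hpos, hzero⟩
    let w : ι → ℝ := fun i => if i ∈ J then if i ∈ M then 1 else ν i else 0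
    have hw0 (i : ι) (hi : i ∉ J) : w i = 0 := if_neg hi
    have hw (i : ι) (hi : i ∈ J) : 0 < w i := by
      by_cases hM : i ∈ M
      · simp [w, hi, hM]
      · simpa [w, hi, hM] using hpos i ⟨hi, hM⟩
    have hwν (i : ι) (hi : i ∉ M) : w i - ν i = 0 := by
      by_cases hJ : i ∈ J
      · simp [w, hi, hJ]
      · simp [w, hJ, hzero i (by simp [hi, hJ])]
    obtain ⟨j, hj⟩ := hJ
    have hS : 0 < ∑ i, w i := Finset.sum_pos' (fun i _ => by
      by_cases hi : i ∈ J
      exacts [(hw i hi).le, (hw0 i hi).ge]) ⟨j, Finset.mem_univ j, hw j hj⟩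
    have hbary := homogenization_inv_smul (p := p) hS.ne'
    refine ⟨_, mem_affineSpan_image_iff.2 ⟨(∑ i, w i)⁻¹ • (w - ν), fun i hi => ?_, ?_⟩,
      _, fun i hi => ?_, fun i hi => ?_, hbary⟩
    · simp [hwν i hi]
    · rw [← hbary, map_smul, map_smul, map_sub, LinearMap.mem_ker.1 hν, sub_zero]
    · exact mul_pos (inv_pos.2 hS) (hw i hi)
    · simp [hw0 i hi]

lemma apply_mem_affineSpan_image_iff {i : ι} :
    p i ∈ affineSpan ℝ (p '' M) ↔
      ∃ σ ∈ signVectors p, (∀ k ∈ {i} \ M, σ k = 1) ∧ ∀ k ∉ {i} ∪ M, σ k = 0 := by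
  classical
  rw [← exists_pos_weights_mem_affineSpan_iff (Set.singleton_nonempty i)]
  constructor
  · refine fun hi => ⟨p i, hi, Pi.single i 1, by simp, fun k hk => ?_, ?_⟩
    · exact Pi.single_eq_of_ne hk 1
    · simp [homogenization]
  · rintro ⟨x, hx, w, -, hw0, hwx⟩
    rwa [eq_apply_of_homogenization_eq hw0 hwx] at hx

lemma openSegment_inter_affineSpan_image_nonempty_iff {i j : ι} (hij : i ≠ j) :
    (openSegment ℝ (p i) (p j) ∩ (affineSpan ℝ (p '' M) : Set X)).Nonempty ↔
      ∃ σ ∈ signVectors p, (∀ k ∈ {i, j} \ M, σ k = 1) ∧ ∀ k ∉ {i, j} ∪ M, σ k = 0 := by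
  classical
  rw [← exists_pos_weights_mem_affineSpan_iff (Set.insert_nonempty i {j})]
  constructor
  · rintro ⟨_, ⟨a, b, ha, hb, hab, rfl⟩, hx⟩
    refine ⟨_, hx, Pi.single i a + Pi.single j b, ?_, fun k hk => ?_, ?_⟩
    · simp [hij, hij.symm, ha, hb]
    · simp only [Set.mem_insert_iff, Set.mem_singleton_iff, not_or] at hk
      simp [hk]
    · simp [homogenization, hab]
  · rintro ⟨x, hx, w, hw, hw0, hwx⟩
    have hpair (k : ι) (hk : k ≠ i ∧ k ≠ j) : w k = 0 := hw0 k (by simp [hk])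
    exact ⟨x, mem_openSegment_of_homogenization_eq hij (hw i (by simp)) (hw j (by simp)) hpair hwx,
      hx⟩

end Module

variable [NormedAddCommGroup X] [NormedSpace ℝ X] [FiniteDimensional ℝ X] {p : ι → X}

lemma affineSpan_image_inter_intrinsicInterior_nonempty_iff [Nonempty ι] {M : Set ι} :
    ((affineSpan ℝ (p '' M) : Set X) ∩
        intrinsicInterior ℝ (convexHull ℝ (Set.range p))).Nonempty ↔
      ∃ σ ∈ signVectors p, ∀ i ∉ M, σ i = 1 := by
  have h := exists_pos_weights_mem_affineSpan_iff (p := p) (M := M) Set.univ_nonempty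
  simp only [Set.mem_univ, Set.mem_sdiff, Set.univ_union, not_true_eq_false, true_and,
    forall_const, false_imp_iff, and_true] at h
  simp only [← h, ← mem_intrinsicInterior_convexHull_range_iff, Set.Nonempty, Set.mem_inter_iff,
    SetLike.mem_coe]

end SignVectors

section Dimension

variable {ι κ X Y : Type*} [Fintype ι] [Fintype κ] [AddCommGroup X] [Module ℝ X]
  [AddCommGroup Y] [Module ℝ Y] {p : ι → X} {q : ι → Y}

lemma homogenization_comp {e : κ → ι} (he : Function.Injective e) (w : ι → ℝ)
    (hw : ∀ i ∉ Set.range e, w i = 0) :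
    homogenization (p ∘ e) (w ∘ e) = homogenization p w := by
  rw [homogenization_apply, homogenization_apply, Prod.mk.injEq]
  exact ⟨Fintype.sum_of_injective e he _ _ hw fun _ => rfl,
    Fintype.sum_of_injective e he _ _ (fun i hi => by rw [hw i hi, zero_smul]) fun _ => rfl⟩

lemma signVectors_comp {e : κ → ι} (he : Function.Injective e) :
    signVectors (p ∘ e) = (· ∘ e) '' {σ ∈ signVectors p | ∀ i ∉ Set.range e, σ i = 0} := by
  ext τ
  constructor
  · rintro ⟨ν, hν, rfl⟩
    have hout (i : ι) (hi : i ∉ Set.range e) : Function.extend e ν 0 i = 0 :=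
      Function.extend_apply' _ _ _ hi
    have hin : Function.extend e ν 0 ∘ e = ν := Function.extend_comp he ν 0
    refine ⟨_, ⟨⟨Function.extend e ν 0, ?_, rfl⟩, fun i hi => by simp [hout i hi]⟩, ?_⟩
    · rw [SetLike.mem_coe, LinearMap.mem_ker, ← homogenization_comp he _ hout, hin]
      exact hν
    · ext k
      simp [← congrFun hin k]
  · rintro ⟨_, ⟨⟨ν, hν, rfl⟩, hout⟩, rfl⟩
    refine ⟨ν ∘ e, ?_, rfl⟩
    rw [SetLike.mem_coe, LinearMap.mem_ker,
      homogenization_comp he ν fun i hi => sign_eq_zero_iff.1 (hout i hi)]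
    exact hν

lemma signVectors_comp_eq_of_eq (h : signVectors p = signVectors q) {e : κ → ι}
    (he : Function.Injective e) : signVectors (p ∘ e) = signVectors (q ∘ e) := by
  rw [signVectors_comp he, signVectors_comp he, h]

lemma affineIndependent_iff_forall_signVectors :
    AffineIndependent ℝ p ↔ ∀ σ ∈ signVectors p, σ = 0 := by
  simp only [affineIndependent_iff_of_fintype, signVectors, Set.forall_mem_image, SetLike.mem_coe,
    LinearMap.mem_ker, homogenization_apply, Prod.mk_eq_zero, funext_iff, Pi.zero_apply,
    sign_eq_zero_iff, and_imp]
  refine forall_congr' fun w => forall_congr' fun hw => ?_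
  rw [Finset.univ.weightedVSub_eq_linear_combination hw]

lemma finrank_vectorSpan_range_le_of_signVectors_eq (h : signVectors p = signVectors q) :
    Module.finrank ℝ (vectorSpan ℝ (Set.range p)) ≤
      Module.finrank ℝ (vectorSpan ℝ (Set.range q)) := by
  obtain ⟨t, htp, hspan, ht⟩ := exists_affineIndependent ℝ X (Set.range p)
  have := (Set.finite_range p).subset htp |>.fintype
  choose e he using fun x : t => htp x.2
  have hpe : p ∘ e = ((↑) : t → X) := funext he
  have he_inj : Function.Injective e := .of_comp (f := p) (hpe ▸ Subtype.val_injective)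
  have hqe : AffineIndependent ℝ (q ∘ e) := by
    rwa [affineIndependent_iff_forall_signVectors, ← signVectors_comp_eq_of_eq h he_inj, hpe,
      ← affineIndependent_iff_forall_signVectors]
  have hle : Module.finrank ℝ (vectorSpan ℝ (Set.range (q ∘ e))) ≤
      Module.finrank ℝ (vectorSpan ℝ (Set.range q)) :=
    Submodule.finrank_mono (vectorSpan_mono ℝ (Set.range_comp_subset_range e q))
  rw [← direction_affineSpan, ← hspan, direction_affineSpan]
  rcases t.eq_empty_or_nonempty with rfl | hne
  · rw [vectorSpan_empty, finrank_bot]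
    exact Nat.zero_le _
  · have := hne.to_subtype
    have hp := ht.finrank_vectorSpan_add_one
    rw [Subtype.range_coe, ← hqe.finrank_vectorSpan_add_one] at hp
    omega

lemma finrank_direction_affineSpan_image_eq (h : signVectors p = signVectors q) (M : Set ι) :
    Module.finrank ℝ (affineSpan ℝ (p '' M)).direction =
      Module.finrank ℝ (affineSpan ℝ (q '' M)).direction := by
  have : Fintype M := Fintype.ofFinite M
  have hM := signVectors_comp_eq_of_eq h (Subtype.val_injective (p := (· ∈ M)))
  rw [direction_affineSpan, direction_affineSpan, ← Subtype.range_val (s := M),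
    ← Set.range_comp, ← Set.range_comp]
  exact le_antisymm (finrank_vectorSpan_range_le_of_signVectors_eq hM)
    (finrank_vectorSpan_range_le_of_signVectors_eq hM.symm)

end Dimension

/-! ### Faces and edges -/

lemma maximizers_convexHull_range_eq {ι X : Type*} [Finite ι] [AddCommGroup X] [Module ℝ X]
    {p : ι → X} {J : Set ι} {a : X →ᵃ[ℝ] ℝ} {c : ℝ} (hne : J.Nonempty)
    (hJ : ∀ i ∈ J, a (p i) = c) (hlt : ∀ i ∉ J, a (p i) < c) :
    {x | x ∈ convexHull ℝ (Set.range p) ∧ ∀ y ∈ convexHull ℝ (Set.range p), a y ≤ a x} =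
      convexHull ℝ (p '' J) := by
  have := Fintype.ofFinite ι
  have hle (i : ι) : a (p i) ≤ c := by
    by_cases hi : i ∈ J
    exacts [(hJ i hi).le, (hlt i hi).le]
  have hbound (y : X) (hy : y ∈ convexHull ℝ (Set.range p)) : a y ≤ c := by
    have hsub : convexHull ℝ (Set.range p) ⊆ a ⁻¹' Set.Iic c :=
      convexHull_min (Set.range_subset_iff.2 hle) ((convex_Iic c).affine_preimage a)
    exact hsub hy
  obtain ⟨j, hj⟩ := hne
  ext x
  constructor
  · rintro ⟨hx, hmax⟩
    have hax : a x = c := (hbound x hx).antisymm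
      (hJ j hj ▸ hmax _ (subset_convexHull ℝ _ (Set.mem_range_self j)))
    obtain ⟨w, hw0, hwx⟩ := mem_convexHull_range_iff.1 hx
    refine mem_convexHull_image_iff.2 ⟨w, hw0, fun i hi => ?_, hwx⟩
    obtain ⟨hsum, rfl⟩ := homogenization_eq_iff.1 hwx
    have hgap : ∑ i, w i * (c - a (p i)) = 0 := by
      simp only [mul_sub, Finset.sum_sub_distrib, sum_mul_affineMap_eq, ← Finset.sum_mul, hsum]
      rw [← hax, congrFun a.decomp (∑ i, w i • p i), Pi.add_apply]
      ring
    have hzero := (Finset.sum_eq_zero_iff_of_nonneg fun i _ =>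
      mul_nonneg (hw0 i) (sub_nonneg.2 (hle i))).1 hgap i (Finset.mem_univ i)
    exact (mul_eq_zero.1 hzero).resolve_right (sub_pos.2 (hlt i hi)).ne'
  · intro hx
    have hax : a x = c := by
      have hsub : convexHull ℝ (p '' J) ⊆ a ⁻¹' {c} :=
        convexHull_min (Set.image_subset_iff.2 hJ) ((convex_singleton c).affine_preimage a)
      exact hsub hx
    exact ⟨convexHull_mono (Set.image_subset_range p J) hx, fun y hy => hax ▸ hbound y hy⟩

section Faces

variable {ι X : Type*} [Fintype ι]

section Module

variable [AddCommGroup X] [Module ℝ X] {p : ι → X} {J : Set ι}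

/-- The points `p i` with `i ∈ J` are those on some face of the convex hull of `p`, expressed
through sign vectors: by Farkas' lemma, this happens unless an affine dependence is nonnegative and
nonzero outside `J`. -/
def IsFacial (p : ι → X) (J : Set ι) : Prop :=
  ∀ σ ∈ signVectors p, (∀ i ∉ J, 0 ≤ σ i) → ∀ i ∉ J, σ i = 0

lemma isFacial_iff_forall_mem_ker :
    IsFacial p J ↔ ∀ ν ∈ LinearMap.ker (homogenization p),
      (∀ i ∉ J, 0 ≤ ν i) → ∀ i ∉ J, ν i = 0 := by
  simp only [IsFacial, signVectors, Set.forall_mem_image, SetLike.mem_coe, sign_nonneg_iff,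
    sign_eq_zero_iff]

lemma isFacial_of_affineMap {a : X →ᵃ[ℝ] ℝ} {c : ℝ} (hJ : ∀ i ∈ J, a (p i) = c)
    (hlt : ∀ i ∉ J, a (p i) < c) : IsFacial p J := by
  refine isFacial_iff_forall_mem_ker.2 fun ν hν hpos i hi => ?_
  rw [LinearMap.mem_ker, homogenization_apply, Prod.mk_eq_zero] at hν
  have hsum : ∑ i, ν i * (c - a (p i)) = 0 := by
    simp only [mul_sub, Finset.sum_sub_distrib, sum_mul_affineMap_eq, ← Finset.sum_mul, hν,
      map_zero, zero_mul, add_zero, sub_zero]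
  have hterm (i : ι) : 0 ≤ ν i * (c - a (p i)) := by
    by_cases hi : i ∈ J
    · simp [hJ i hi]
    · exact mul_nonneg (hpos i hi) (sub_nonneg.2 (hlt i hi).le)
  have hzero := (Finset.sum_eq_zero_iff_of_nonneg fun i _ => hterm i).1 hsum i (Finset.mem_univ i)
  exact (mul_eq_zero.1 hzero).resolve_right (sub_pos.2 (hlt i hi)).ne'

lemma apply_eq_of_forall_lt_of_mem (f : X →ₗ[ℝ] ℝ) {A : AffineSubspace ℝ X} {v : ℝ}
    (hA : ∀ x ∈ A, v < f x) {x y : X} (hx : x ∈ A) (hy : y ∈ A) : f x = f y := by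
  by_contra hxy
  have hne : f x - f y ≠ 0 := sub_ne_zero.2 hxy
  have hlt := hA _ (A.smul_vsub_vadd_mem ((v - f y) / (f x - f y)) hx hy hy)
  rw [vsub_eq_sub, vadd_eq_add, map_add, map_smul, map_sub, smul_eq_mul,
    div_mul_cancel₀ _ hne, sub_add_cancel] at hlt
  exact hlt.false

end Module

section Normed

variable [NormedAddCommGroup X] [NormedSpace ℝ X]

lemma IsFacial.exists_affineMap [FiniteDimensional ℝ X] {p : ι → X} {J : Set ι}
    (h : IsFacial p J) (hne : J.Nonempty) :
    ∃ (a : X →ᵃ[ℝ] ℝ) (c : ℝ), (∀ i ∈ J, a (p i) = c) ∧ ∀ i ∉ J, a (p i) < c := by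
  have hdisj : Disjoint (convexHull ℝ (p '' Jᶜ)) (affineSpan ℝ (p '' J) : Set X) := by
    refine Set.disjoint_left.2 fun x hxC hxA => ?_
    obtain ⟨w, hw0, hwJ, hwx⟩ := mem_convexHull_image_iff.1 hxC
    obtain ⟨u, huJ, hux⟩ := mem_affineSpan_image_iff.1 hxA
    have hker : w - u ∈ LinearMap.ker (homogenization p) := by simp [hwx, hux]
    have hzero := isFacial_iff_forall_mem_ker.1 h _ hker fun i hi => by
      simpa [huJ i hi] using hw0 i
    have hw (i : ι) : w i = 0 := by
      by_cases hi : i ∈ J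
      · exact hwJ i (by simpa using hi)
      · simpa [huJ i hi] using hzero i hi
    simpa [hw] using (homogenization_eq_iff.1 hwx).1
  obtain ⟨f, u, v, hfC, huv, hfA⟩ := geometric_hahn_banach_compact_closed
    (convex_convexHull ℝ (p '' Jᶜ)) ((Set.toFinite (p '' Jᶜ)).isCompact_convexHull ℝ)
    (affineSpan ℝ (p '' J)).convex (affineSpan ℝ (p '' J)).closed_of_finiteDimensional hdisj
  obtain ⟨j, hj⟩ := hne
  have hmem (i : ι) (hi : i ∈ J) : p i ∈ affineSpan ℝ (p '' J) :=
    subset_affineSpan ℝ _ (Set.mem_image_of_mem p hi)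
  refine ⟨f.toLinearMap.toAffineMap, f (p j), fun i hi => ?_, fun i hi => ?_⟩
  · exact apply_eq_of_forall_lt_of_mem f.toLinearMap hfA (hmem i hi) (hmem j hj)
  · exact (hfC _ (subset_convexHull ℝ _ (Set.mem_image_of_mem p hi))).trans
      (huv.trans (hfA _ (hmem j hj)))

lemma left_mem_extremePoints_convexHull_pair {u w : X} (huw : u ≠ w) :
    u ∈ (convexHull ℝ {u, w}).extremePoints ℝ := by
  by_contra hu
  have hsub : (convexHull ℝ {u, w}).extremePoints ℝ ⊆ {w} := fun x hx => by
    rcases extremePoints_convexHull_subset hx with rfl | hxw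
    exacts [absurd hx hu, hxw]
  have hpair : convexHull ℝ {u, w} ⊆ {w} := by
    rw [← closure_convexHull_extremePoints ((Set.toFinite {u, w}).isCompact_convexHull ℝ)
      (convex_convexHull ℝ _)]
    exact closure_minimal (convexHull_min hsub (convex_singleton w)) isClosed_singleton
  exact huw (hpair (subset_convexHull ℝ _ (Set.mem_insert u _)))

end Normed

end Faces

section Edges

variable {ι : Type*} [Fintype ι] {N : ℕ} {p : ι → E N} {V : Set (E N)} {u w : E N}

lemma isFaceOf_convexHull_image_iff (hp : ConvexIndependent ℝ p) {J : Set ι}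
    (hne : J.Nonempty) :
    IsFaceOf (Set.range p) (convexHull ℝ (p '' J)) ↔ IsFacial p J := by
  constructor
  · rintro ⟨a, ha⟩
    obtain ⟨j, hj⟩ := hne
    have hmem (i : ι) : p i ∈ convexHull ℝ (Set.range p) :=
      subset_convexHull ℝ _ (Set.mem_range_self i)
    have hmax (i : ι) (hi : i ∈ J) : ∀ y ∈ convexHull ℝ (Set.range p), a y ≤ a (p i) :=
      (ha.subset (subset_convexHull ℝ _ (Set.mem_image_of_mem p hi))).2
    refine isFacial_of_affineMap (a := a) (c := a (p j))
      (fun i hi => (hmax j hj _ (hmem i)).antisymm (hmax i hi _ (hmem j))) fun i hi => ?_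
    by_contra! hji
    exact hi ((hp.mem_convexHull_iff J i).1 (ha.superset
      ⟨hmem i, fun y hy => (hmax j hj y hy).trans hji⟩))
  · intro h
    obtain ⟨a, c, hJ, hlt⟩ := h.exists_affineMap hne
    exact ⟨a, (maximizers_convexHull_range_eq hne hJ hlt).symm⟩

lemma isEdge_apply_iff (hp : ConvexIndependent ℝ p) {i j : ι} :
    IsEdge (Set.range p) (p i) (p j) ↔ i ≠ j ∧ IsFacial p {i, j} := by
  rw [IsEdge, hp.injective.ne_iff, ← Set.image_pair,
    isFaceOf_convexHull_image_iff hp (Set.insert_nonempty i {j})]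

lemma IsFaceOf.isExtreme {F : Set (E N)} (hF : IsFaceOf V F) :
    IsExtreme ℝ (convexHull ℝ V) F := by
  obtain ⟨a, rfl⟩ := hF
  refine IsExposed.isExtreme fun _ => ⟨a.linear.toContinuousLinearMap, ?_⟩
  have hlinear (x y : E N) : a y ≤ a x ↔ a.linear y ≤ a.linear x := by
    rw [congrFun a.decomp y, congrFun a.decomp x, Pi.add_apply, Pi.add_apply,
      add_le_add_iff_right]
  ext x
  simp [hlinear]

lemma IsEdge.symm (h : IsEdge V u w) : IsEdge V w u :=
  ⟨h.1.symm, Set.pair_comm u w ▸ h.2⟩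

lemma IsEdge.left_mem (h : IsEdge V u w) : u ∈ V :=
  extremePoints_convexHull_subset
    (h.2.isExtreme.extremePoints_subset_extremePoints (left_mem_extremePoints_convexHull_pair h.1))

/-- No edge of the polytope spanned by `p` has its endpoints strictly on opposite sides of `H`,
with edges given by the indices of their endpoints. -/
def CutsNoEdge (p : ι → E N) (H : AffineSubspace ℝ (E N)) : Prop :=
  ∀ i j, i ≠ j → IsFacial p {i, j} → ¬ StrictlySeparates H (p i) (p j)

lemma forall_isEdge_not_strictlySeparates_iff (hp : ConvexIndependent ℝ p)
    {H : AffineSubspace ℝ (E N)} :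
    (∀ u w, IsEdge (Set.range p) u w → ¬ StrictlySeparates H u w) ↔ CutsNoEdge p H := by
  refine ⟨fun h i j hij hJ => h _ _ ((isEdge_apply_iff hp).2 ⟨hij, hJ⟩), fun h u w huw => ?_⟩
  obtain ⟨i, rfl⟩ := huw.left_mem
  obtain ⟨j, rfl⟩ := huw.symm.left_mem
  exact h i j ((isEdge_apply_iff hp).1 huw).1 ((isEdge_apply_iff hp).1 huw).2

end Edges

/-! ### Hyperplane sections -/

section ConvexIndependent

variable {ι X : Type*} [AddCommGroup X] [Module ℝ X] {p : ι → X}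

lemma eq_or_eq_of_wbtw_apply (hp : ConvexIndependent ℝ p) {i j k : ι}
    (h : Wbtw ℝ (p i) (p j) (p k)) : j = i ∨ j = k :=
  (hp.mem_convexHull_iff {i, k} j).1 (by
    rw [Set.image_pair, convexHull_pair]
    exact h.mem_segment)

lemma subset_pair_of_collinear_image (hp : ConvexIndependent ℝ p) {J : Set ι}
    (hJ : Collinear ℝ (p '' J)) {i j : ι} (hi : i ∈ J) (hj : j ∈ J) (hij : i ≠ j) :
    J ⊆ {i, j} := by
  intro k hk
  have hcol : Collinear ℝ {p i, p j, p k} := hJ.subset (by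
    rintro _ (rfl | rfl | rfl)
    exacts [Set.mem_image_of_mem p hi, Set.mem_image_of_mem p hj, Set.mem_image_of_mem p hk])
  rcases hcol.wbtw_or_wbtw_or_wbtw with h | h | h
  · exact Or.inr ((eq_or_eq_of_wbtw_apply hp h).resolve_left hij.symm).symm
  · exact (eq_or_eq_of_wbtw_apply hp h).symm
  · exact Or.inl ((eq_or_eq_of_wbtw_apply hp h).resolve_right hij).symm

end ConvexIndependent

lemma finrank_direction_le_one_of_inter_subset_singleton {X : Type*} [AddCommGroup X]
    [Module ℝ X] [FiniteDimensional ℝ X] {A B C : AffineSubspace ℝ X} {x : X} (hA : A ≤ C)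
    (hB : B ≤ C)
    (hcodim : Module.finrank ℝ A.direction + 1 = Module.finrank ℝ C.direction)
    (hxA : x ∈ A) (hxB : x ∈ B) (hinter : ∀ y ∈ A, y ∈ B → y = x) :
    Module.finrank ℝ B.direction ≤ 1 := by
  have hdisj : A.direction ⊓ B.direction = ⊥ := by
    refine (Submodule.eq_bot_iff _).2 fun v hv => ?_
    simpa using hinter (v +ᵥ x) (A.vadd_mem_of_mem_direction hv.1 hxA)
      (B.vadd_mem_of_mem_direction hv.2 hxB)
  have hle := Submodule.finrank_mono (sup_le (AffineSubspace.direction_le hA)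
    (AffineSubspace.direction_le hB))
  have hdim := Submodule.finrank_sup_add_finrank_inf_eq A.direction B.direction
  rw [hdisj, finrank_bot] at hdim
  omega

section Sections

variable {ι X : Type*} [Fintype ι]

section Module

variable [AddCommGroup X] [Module ℝ X] {p : ι → X} {x y : X}

-- Among the nonnegative weights of `x`, those of maximal support have facial support.
lemma exists_weights_isFacial_support (hx : x ∈ convexHull ℝ (Set.range p)) :
    ∃ w : ι → ℝ, 0 ≤ w ∧ homogenization p w = (1, x) ∧ IsFacial p w.support := by
  let S : Set (Set ι) := Function.support '' {w : ι → ℝ | 0 ≤ w ∧ homogenization p w = (1, x)}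
  have hS : S.Nonempty := Set.Nonempty.image _ (mem_convexHull_range_iff.1 hx)
  obtain ⟨_, ⟨w, ⟨hw0, hwx⟩, rfl⟩, hmax⟩ := (Set.toFinite S).exists_maximal hS
  refine ⟨w, hw0, hwx, isFacial_iff_forall_mem_ker.2 fun ν hν hpos => ?_⟩
  obtain ⟨ε, hε, hpert⟩ := exists_pos_perturbation w ν
  have hwpos (i : ι) (hi : i ∈ w.support) : 0 < (w + ε • ν) i :=
    hpert ε (abs_of_pos hε).le i ((hw0 i).lt_of_ne' hi)
  have hnonneg : 0 ≤ w + ε • ν := fun i => by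
    by_cases hi : i ∈ w.support
    · exact (hwpos i hi).le
    · exact add_nonneg (hw0 i) (mul_nonneg hε.le (hpos i hi))
  have hmem : (w + ε • ν).support ∈ S :=
    ⟨_, ⟨hnonneg, (homogenization_add_of_mem_ker (Submodule.smul_mem _ ε hν) w).trans hwx⟩, rfl⟩
  intro i hi
  have hi' : (w + ε • ν) i = 0 := by
    by_contra h
    exact hi (hmax hmem (fun k hk => (hwpos k hk).ne') h)
  simpa [Function.notMem_support.1 hi, hε.ne'] using hi'

lemma eq_of_mem_extremePoints_inter_convexHull {H : AffineSubspace ℝ X}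
    (hx : x ∈ ((H : Set X) ∩ convexHull ℝ (Set.range p)).extremePoints ℝ) {w : ι → ℝ}
    (hw0 : 0 ≤ w) (hwx : homogenization p w = (1, x)) (hyH : y ∈ H)
    (hy : y ∈ affineSpan ℝ (p '' w.support)) : y = x := by
  obtain ⟨u, hu0, huy⟩ := mem_affineSpan_image_iff.1 hy
  obtain ⟨ε, hε, hpert⟩ := exists_pos_perturbation w (u - w)
  have hmem (c : ℝ) (hc : |c| ≤ ε) :
      x + c • (y - x) ∈ (H : Set X) ∩ convexHull ℝ (Set.range p) := by
    refine ⟨?_, mem_convexHull_range_iff.2 ⟨w + c • (u - w), fun i => ?_, by simp [hwx, huy]⟩⟩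
    · simpa [add_comm] using H.smul_vsub_vadd_mem c hyH hx.1.1 hx.1.1
    · by_cases hi : i ∈ w.support
      · exact (hpert c hc i ((hw0 i).lt_of_ne' hi)).le
      · simp [hu0 i hi, Function.notMem_support.1 hi]
  have hseg : x ∈ openSegment ℝ (x + ε • (y - x)) (x + (-ε) • (y - x)) :=
    ⟨1 / 2, 1 / 2, by norm_num, by norm_num, by norm_num, by module⟩
  have hfix : x + ε • (y - x) = x := (mem_extremePoints_iff_left.1 hx).2 _
    (hmem ε (abs_of_pos hε).le) _ (hmem (-ε) (by rw [abs_neg, abs_of_pos hε])) hseg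
  simpa [hε.ne', sub_eq_zero] using hfix

end Module

variable {N : ℕ} {p : ι → E N} {H : AffineSubspace ℝ (E N)}

-- An extreme point of the section whose carrier face has dimension at least two would move inside
-- the section; on an edge it would separate the endpoints.
lemma mem_range_of_mem_extremePoints_inter (hp : ConvexIndependent ℝ p)
    (hH : H ≤ affineSpan ℝ (Set.range p))
    (hcodim : Module.finrank ℝ H.direction + 1 = adim (Set.range p)) (hcut : CutsNoEdge p H)
    {x : E N} (hx : x ∈ ((H : Set (E N)) ∩ convexHull ℝ (Set.range p)).extremePoints ℝ) :
    x ∈ Set.range p := by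
  obtain ⟨w, hw0, hwx, hfacial⟩ := exists_weights_isFacial_support hx.1.2
  have hfix (y : E N) (hyH : y ∈ H) (hy : y ∈ affineSpan ℝ (p '' w.support)) : y = x :=
    eq_of_mem_extremePoints_inter_convexHull hx hw0 hwx hyH hy
  have hvertex (i : ι) (hi : i ∈ w.support) (hiH : p i ∈ H) : x ∈ Set.range p :=
    ⟨i, hfix _ hiH (subset_affineSpan ℝ _ (Set.mem_image_of_mem p hi))⟩
  have hsupport : w.support.Nonempty := by
    rw [Function.support_nonempty_iff]
    rintro rfl
    simp [Prod.ext_iff] at hwx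
  rcases hsupport.exists_eq_singleton_or_nontrivial with ⟨i, hi⟩ | ⟨i, hi, j, hj, hij⟩
  · refine ⟨i, (eq_apply_of_homogenization_eq (fun k hk => ?_) hwx).symm⟩
    exact Function.notMem_support.1 (hi ▸ hk)
  · have hcol : Collinear ℝ (p '' w.support) := by
      rw [collinear_iff_finrank_le_one, ← direction_affineSpan]
      exact finrank_direction_le_one_of_inter_subset_singleton hH
        (affineSpan_mono ℝ (Set.image_subset_range p _)) hcodim hx.1.1
        (mem_affineSpan_image_iff.2 ⟨w, fun k hk => Function.notMem_support.1 hk, hwx⟩) hfix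
    have hpair : w.support = {i, j} := (subset_pair_of_collinear_image hp hcol hi hj hij).antisymm
      (Set.pair_subset hi hj)
    have hseg : x ∈ openSegment ℝ (p i) (p j) := by
      refine mem_openSegment_of_homogenization_eq hij ((hw0 i).lt_of_ne' hi)
        ((hw0 j).lt_of_ne' hj) (fun k hk => Function.notMem_support.1 ?_) hwx
      simp [hpair, hk]
    by_contra hxp
    exact hcut i j hij (hpair ▸ hfacial)
      ⟨fun h => hxp (hvertex i hi h), fun h => hxp (hvertex j hj h), x, hseg, hx.1.1⟩

lemma inter_convexHull_range_eq_of_cutsNoEdge (hp : ConvexIndependent ℝ p)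
    (hH : H ≤ affineSpan ℝ (Set.range p))
    (hcodim : Module.finrank ℝ H.direction + 1 = adim (Set.range p)) (hcut : CutsNoEdge p H) :
    (H : Set (E N)) ∩ convexHull ℝ (Set.range p) = convexHull ℝ (p '' (p ⁻¹' H)) := by
  have hcompact : IsCompact ((H : Set (E N)) ∩ convexHull ℝ (Set.range p)) :=
    ((Set.finite_range p).isCompact_convexHull ℝ).inter_left H.closed_of_finiteDimensional
  refine Set.Subset.antisymm ?_ (Set.subset_inter
    (convexHull_min (Set.image_preimage_subset p _) H.convex)
    (convexHull_mono (Set.image_subset_range p _)))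
  rw [← closure_convexHull_extremePoints hcompact (H.convex.inter (convex_convexHull ℝ _))]
  refine closure_minimal (convexHull_mono fun x hx => ?_)
    ((Set.toFinite (p '' (p ⁻¹' H))).isClosed_convexHull ℝ)
  obtain ⟨i, rfl⟩ := mem_range_of_mem_extremePoints_inter hp hH hcodim hcut hx
  exact Set.mem_image_of_mem p hx.1.1

end Sections

lemma IsSplitHyperplane.inter_convexHull_range_eq {ι : Type*} [Finite ι] {N : ℕ} {p : ι → E N}
    (hp : ConvexIndependent ℝ p) {H : AffineSubspace ℝ (E N)}
    (hH : IsSplitHyperplane (Set.range p) H) :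
    (H : Set (E N)) ∩ convexHull ℝ (Set.range p) = convexHull ℝ (p '' (p ⁻¹' H)) := by
  have := Fintype.ofFinite ι
  exact inter_convexHull_range_eq_of_cutsNoEdge hp hH.1 hH.2.1
    ((forall_isEdge_not_strictlySeparates_iff hp).1 hH.2.2.2)

section Compatibility

variable {ι X : Type*} [Fintype ι] [NormedAddCommGroup X] [NormedSpace ℝ X]
  [FiniteDimensional ℝ X] {p : ι → X} {J₁ J₂ : Set ι}

lemma inter_intrinsicInterior_nonempty_of_homogenization_eq [Nonempty ι] {l m k : ι → ℝ}
    (hl0 : 0 ≤ l) (hl : ∀ i ∉ J₁, l i = 0) (hm0 : 0 ≤ m) (hm : ∀ i ∉ J₂, m i = 0)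
    (hk0 : ∀ i, 0 < k i) (hlk : homogenization p l = homogenization p k)
    (hmk : homogenization p m = homogenization p k) :
    (convexHull ℝ (p '' J₁) ∩ convexHull ℝ (p '' J₂) ∩
      intrinsicInterior ℝ (convexHull ℝ (Set.range p))).Nonempty := by
  have hS : 0 < ∑ i, k i := Finset.sum_pos (fun i _ => hk0 i) Finset.univ_nonempty
  have hS' : 0 < (∑ i, k i)⁻¹ := inv_pos.2 hS
  have hx := homogenization_inv_smul (p := p) hS.ne'
  refine ⟨_, ⟨mem_convexHull_image_iff.2 ⟨_, smul_nonneg hS'.le hl0, ?_, ?_⟩,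
    mem_convexHull_image_iff.2 ⟨_, smul_nonneg hS'.le hm0, ?_, ?_⟩⟩,
    mem_intrinsicInterior_convexHull_range_iff.2 ⟨_, fun i => mul_pos hS' (hk0 i), hx⟩⟩
  · exact fun i hi => by simp [hl i hi]
  · rw [map_smul, hlk, ← map_smul, hx]
  · exact fun i hi => by simp [hm i hi]
  · rw [map_smul, hmk, ← map_smul, hx]

-- Here `σ` is the sign vector of the difference of weights on `J₁` and `J₂` of a common point, and
-- `τ` that of a dependence which makes the weights on `J₁` positive everywhere.
lemma convexHull_image_inter_intrinsicInterior_nonempty_iff [Nonempty ι] :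
    (convexHull ℝ (p '' J₁) ∩ convexHull ℝ (p '' J₂) ∩
        intrinsicInterior ℝ (convexHull ℝ (Set.range p))).Nonempty ↔
      ∃ σ ∈ signVectors p, (∀ i ∉ J₁, σ i ≤ 0) ∧ (∀ i ∉ J₂, 0 ≤ σ i) ∧
        ∃ τ ∈ signVectors p, ∀ i ∉ J₁ ∩ J₂, σ i ≤ 0 → τ i = 1 := by
  classical
  simp only [signVectors, Set.exists_mem_image, sign_eq_one_iff, sign_nonneg_iff, sign_nonpos_iff]
  constructor
  · rintro ⟨x, ⟨hx₁, hx₂⟩, hx⟩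
    obtain ⟨l, hl0, hl, hlx⟩ := mem_convexHull_image_iff.1 hx₁
    obtain ⟨m, hm0, hm, hmx⟩ := mem_convexHull_image_iff.1 hx₂
    obtain ⟨k, hk0, hkx⟩ := mem_intrinsicInterior_convexHull_range_iff.1 hx
    refine ⟨l - m, by simp [hlx, hmx], fun i hi => ?_, fun i hi => ?_,
      k - l, by simp [hkx, hlx], fun i hi hlm => ?_⟩
    · simpa [hl i hi] using hm0 i
    · simpa [hm i hi] using hl0 i
    · have hli : l i = 0 := by
        by_cases hi₁ : i ∈ J₁
        · have hmi : m i = 0 := hm i fun hi₂ => hi ⟨hi₁, hi₂⟩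
          exact le_antisymm (by simpa [hmi] using hlm) (hl0 i)
        · exact hl i hi₁
      simpa [hli] using hk0 i
  · rintro ⟨μ, hμ, hμ₁, hμ₂, ν, hν, hpos⟩
    let l : ι → ℝ := μ⁺ + (J₁ ∩ J₂).indicator 1
    let m : ι → ℝ := μ⁻ + (J₁ ∩ J₂).indicator 1
    have hind : (0 : ι → ℝ) ≤ (J₁ ∩ J₂).indicator 1 := Set.indicator_nonneg fun _ _ => zero_le_one
    have hl0 : 0 ≤ l := add_nonneg (posPart_nonneg μ) hind
    have hm0 : 0 ≤ m := add_nonneg (negPart_nonneg μ) hind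
    have hl (i : ι) (hi : i ∉ J₁) : l i = 0 := by simp [l, hi, hμ₁ i hi]
    have hm (i : ι) (hi : i ∉ J₂) : m i = 0 := by simp [m, hi, hμ₂ i hi]
    obtain ⟨ε, hk⟩ := exists_forall_pos_add_smul hl0 fun i (hli : l i = 0) => by
      obtain ⟨hμi, hmem⟩ := (add_eq_zero_iff_of_nonneg (posPart_nonneg μ i) (hind i)).1 hli
      exact hpos i (by simpa using hmem) (by simpa using hμi)
    have hlm : l = m + μ := by
      change μ⁺ + _ = μ⁻ + _ + μ
      linear_combination posPart_sub_negPart μ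
    have hkl := homogenization_add_of_mem_ker (Submodule.smul_mem _ ε hν) l
    have hml : homogenization p l = homogenization p m :=
      hlm ▸ homogenization_add_of_mem_ker hμ m
    exact inter_intrinsicInterior_nonempty_of_homogenization_eq hl0 hl hm0 hm hk hkl.symm
      (hkl.trans hml).symm

end Compatibility

/-! ### Invariance under the oriented matroid -/

section Invariance

variable {ι : Type*} [Fintype ι] {N N' : ℕ} {p : ι → E N} {q : ι → E N'}

lemma preimage_affineSpan_image_eq (h : signVectors p = signVectors q) (M : Set ι) :
    p ⁻¹' (affineSpan ℝ (p '' M) : Set (E N)) = q ⁻¹' (affineSpan ℝ (q '' M) : Set (E N')) := by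
  ext i
  simp only [Set.mem_preimage, SetLike.mem_coe, apply_mem_affineSpan_image_iff, h]

lemma strictlySeparates_affineSpan_image_iff (h : signVectors p = signVectors q) {M : Set ι}
    {i j : ι} (hij : i ≠ j) :
    StrictlySeparates (affineSpan ℝ (p '' M)) (p i) (p j) ↔
      StrictlySeparates (affineSpan ℝ (q '' M)) (q i) (q j) := by
  simp only [StrictlySeparates, apply_mem_affineSpan_image_iff,
    openSegment_inter_affineSpan_image_nonempty_iff hij, h]

lemma cutsNoEdge_affineSpan_image_iff (h : signVectors p = signVectors q) {M : Set ι} :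
    CutsNoEdge p (affineSpan ℝ (p '' M)) ↔ CutsNoEdge q (affineSpan ℝ (q '' M)) := by
  simp only [CutsNoEdge, IsFacial, h]
  exact forall₃_congr fun i j hij => by rw [strictlySeparates_affineSpan_image_iff h hij]

lemma adim_range_eq (h : signVectors p = signVectors q) :
    adim (Set.range p) = adim (Set.range q) := by
  rw [adim, adim, ← Set.image_univ, ← Set.image_univ]
  exact finrank_direction_affineSpan_image_eq h Set.univ

lemma isSplitHyperplane_affineSpan_image_iff [Nonempty ι] (hp : ConvexIndependent ℝ p)
    (hq : ConvexIndependent ℝ q) (h : signVectors p = signVectors q) (M : Set ι) :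
    IsSplitHyperplane (Set.range p) (affineSpan ℝ (p '' M)) ↔
      IsSplitHyperplane (Set.range q) (affineSpan ℝ (q '' M)) := by
  simp only [IsSplitHyperplane, affineSpan_mono ℝ (Set.image_subset_range _ M), true_and,
    forall_isEdge_not_strictlySeparates_iff hp, forall_isEdge_not_strictlySeparates_iff hq,
    affineSpan_image_inter_intrinsicInterior_nonempty_iff, adim_range_eq h,
    finrank_direction_affineSpan_image_eq h, cutsNoEdge_affineSpan_image_iff h, h]

lemma IsSplitHyperplane.inter_inter_nonempty_iff [Nonempty ι] (hp : ConvexIndependent ℝ p)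
    {H₁ H₂ : AffineSubspace ℝ (E N)} (hH₁ : IsSplitHyperplane (Set.range p) H₁)
    (hH₂ : IsSplitHyperplane (Set.range p) H₂) :
    ((H₁ : Set (E N)) ∩ H₂ ∩ intrinsicInterior ℝ (convexHull ℝ (Set.range p))).Nonempty ↔
      ∃ σ ∈ signVectors p, (∀ i ∉ p ⁻¹' H₁, σ i ≤ 0) ∧ (∀ i ∉ p ⁻¹' H₂, 0 ≤ σ i) ∧
        ∃ τ ∈ signVectors p, ∀ i ∉ p ⁻¹' (H₁ : Set (E N)) ∩ p ⁻¹' H₂, σ i ≤ 0 → τ i = 1 := by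
  rw [← convexHull_image_inter_intrinsicInterior_nonempty_iff,
    ← hH₁.inter_convexHull_range_eq hp, ← hH₂.inter_convexHull_range_eq hp,
    ← Set.inter_inter_distrib_right, Set.inter_assoc _ (convexHull ℝ _),
    Set.inter_eq_right.2 intrinsicInterior_subset]

lemma affineSpan_image_inter_inter_eq_empty_iff [Nonempty ι] (hp : ConvexIndependent ℝ p)
    (hq : ConvexIndependent ℝ q) (h : signVectors p = signVectors q) {M₁ M₂ : Set ι}
    (hM₁ : IsSplitHyperplane (Set.range p) (affineSpan ℝ (p '' M₁)))
    (hM₂ : IsSplitHyperplane (Set.range p) (affineSpan ℝ (p '' M₂))) :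
    (affineSpan ℝ (p '' M₁) : Set (E N)) ∩ affineSpan ℝ (p '' M₂) ∩
        intrinsicInterior ℝ (convexHull ℝ (Set.range p)) = ∅ ↔
      (affineSpan ℝ (q '' M₁) : Set (E N')) ∩ affineSpan ℝ (q '' M₂) ∩
        intrinsicInterior ℝ (convexHull ℝ (Set.range q)) = ∅ := by
  have hM₁' := (isSplitHyperplane_affineSpan_image_iff hp hq h M₁).1 hM₁
  have hM₂' := (isSplitHyperplane_affineSpan_image_iff hp hq h M₂).1 hM₂
  rw [← Set.not_nonempty_iff_eq_empty, ← Set.not_nonempty_iff_eq_empty,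
    hM₁.inter_inter_nonempty_iff hp hM₂, hM₁'.inter_inter_nonempty_iff hq hM₂',
    preimage_affineSpan_image_eq h, preimage_affineSpan_image_eq h, h]

end Invariance

section OrientedMatroidMaps

variable {ι : Type*} [Fintype ι] {N N' : ℕ} {p : ι → E N} {q : ι → E N'}

lemma finsum_eq_sum_apply {α Y : Type*} [AddCommMonoid Y] {e : ι → α}
    (he : Function.Injective e) {f : α → Y} (hf : ∀ a ∉ Set.range e, f a = 0) :
    ∑ᶠ a, f a = ∑ i, f (e i) := by
  have hsupp : Function.support f ⊆ Finset.univ.map ⟨e, he⟩ := fun a ha => by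
    simpa using not_imp_comm.1 (hf a) ha
  rw [finsum_eq_sum_of_support_subset f hsupp, Finset.sum_map]
  rfl

lemma sign_eq_of_realSign_eq {r s : ℝ} (h : Real.sign r = Real.sign s) :
    SignType.sign r = SignType.sign s := by
  have sign_realSign (t : ℝ) : SignType.sign (Real.sign t) = SignType.sign t := by
    rcases lt_trichotomy t 0 with ht | rfl | ht
    · rw [Real.sign_of_neg ht, sign_neg ht, sign_neg (by norm_num)]
    · rw [Real.sign_zero]
    · rw [Real.sign_of_pos ht, sign_pos ht, sign_pos one_pos]
  rw [← sign_realSign r, h, sign_realSign]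

lemma homogenization_eq_finsum (hp : Function.Injective p) {lam : E N → ℝ}
    (hlam : ∀ v ∉ Set.range p, lam v = 0) :
    homogenization p (lam ∘ p) = (∑ᶠ v, lam v, ∑ᶠ v, lam v • v) := by
  rw [homogenization_apply, finsum_eq_sum_apply hp hlam,
    finsum_eq_sum_apply hp fun v hv => by rw [hlam v hv, zero_smul]]
  rfl

lemma signVectors_subset_of_oMMap (hp : Function.Injective p) (hq : Function.Injective q)
    {φ : E N → E N'} (hφ : ∀ i, φ (p i) = q i) (h : OMMap (Set.range p) (Set.range q) φ) :
    signVectors p ⊆ signVectors q := by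
  rintro _ ⟨ν, hν, rfl⟩
  have hout : ∀ v ∉ Set.range p, Function.extend p ν 0 v = 0 :=
    fun v hv => Function.extend_apply' _ _ _ hv
  have hker := homogenization_eq_finsum hp hout
  rw [Function.extend_comp hp, LinearMap.mem_ker.1 hν, eq_comm, Prod.mk_eq_zero] at hker
  obtain ⟨mu, hmu, hsum, hdep, hsign⟩ := h _ hout hker.1 hker.2
  refine ⟨mu ∘ q, ?_, funext fun i => sign_eq_of_realSign_eq ?_⟩
  · rw [SetLike.mem_coe, LinearMap.mem_ker, homogenization_eq_finsum hq hmu, hsum, hdep]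
    rfl
  · rw [Function.comp_apply, ← hφ, hsign _ (Set.mem_range_self i), hp.extend_apply]

end OrientedMatroidMaps

lemma IsPolytope.convexIndependent {ι : Type*} {N : ℕ} {p : ι → E N} {V : Set (E N)}
    (hV : IsPolytope V) (hp : Function.Injective p) (hrange : Set.range p = V) :
    ConvexIndependent ℝ p := by
  subst hrange
  have hext := (convex_convexHull ℝ (Set.range p)).convexIndependent_extremePoints
  rw [← hV.2.2] at hext
  exact hext.comp_embedding
    ⟨Set.rangeFactorization p, Set.rangeFactorization_injective.2 hp⟩

/-- Splits and their compatibility only depend on the oriented matroid. -/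
theorem splits_depend_only_on_oriented_matroid {N N' : ℕ}
    (V : Set (E N)) (V' : Set (E N')) (hV : IsPolytope V) (hV' : IsPolytope V')
    (φ : E N → E N') (ψ : E N' → E N)
    (hbij : Set.BijOn φ V V')
    (hinv₁ : ∀ v ∈ V, ψ (φ v) = v) (hinv₂ : ∀ u ∈ V', φ (ψ u) = u)
    (hom : OMMap V V' φ) (hom' : OMMap V' V ψ) :
    (∀ M : Set (E N), M ⊆ V →
      (IsSplitHyperplane V (affineSpan ℝ M) ↔
        IsSplitHyperplane V' (affineSpan ℝ (φ '' M)))) ∧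
    (∀ M₁ M₂ : Set (E N), M₁ ⊆ V → M₂ ⊆ V →
      IsSplitHyperplane V (affineSpan ℝ M₁) →
      IsSplitHyperplane V (affineSpan ℝ M₂) →
      (((affineSpan ℝ M₁ : Set (E N)) ∩ (affineSpan ℝ M₂ : Set (E N)) ∩
          intrinsicInterior ℝ (convexHull ℝ V) = ∅) ↔
        ((affineSpan ℝ (φ '' M₁) : Set (E N')) ∩ (affineSpan ℝ (φ '' M₂) : Set (E N')) ∩
          intrinsicInterior ℝ (convexHull ℝ V') = ∅))) := by
  have : Fintype V := hV.1.fintype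
  have : Nonempty V := hV.2.1.to_subtype
  obtain ⟨p, hpdef⟩ : ∃ p : V → E N, p = Subtype.val := ⟨_, rfl⟩
  have hp_inj : Function.Injective p := hpdef ▸ Subtype.val_injective
  have hp_range : Set.range p = V := hpdef ▸ Subtype.range_val
  have hq_inj : Function.Injective (φ ∘ p) := hpdef ▸ hbij.injOn.injective
  have hq_range : Set.range (φ ∘ p) = V' := by rw [Set.range_comp, hp_range, hbij.image_eq]
  have hp := hV.convexIndependent hp_inj hp_range
  have hq := hV'.convexIndependent hq_inj hq_range
  rw [← hp_range, ← hq_range] at hom hom'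
  have hsign : signVectors p = signVectors (φ ∘ p) :=
    (signVectors_subset_of_oMMap hp_inj hq_inj (fun _ => rfl) hom).antisymm
      (signVectors_subset_of_oMMap hq_inj hp_inj (fun i => hinv₁ _ (hp_range.subset ⟨i, rfl⟩)) hom')
  rw [← hp_range, ← hq_range]
  refine ⟨fun M hM => ?_, fun M₁ M₂ hM₁ hM₂ => ?_⟩
  · obtain ⟨M, rfl⟩ := Set.subset_range_iff_exists_image_eq.1 hM
    rw [← Set.image_comp]
    exact isSplitHyperplane_affineSpan_image_iff hp hq hsign M
  · obtain ⟨M₁, rfl⟩ := Set.subset_range_iff_exists_image_eq.1 hM₁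
    obtain ⟨M₂, rfl⟩ := Set.subset_range_iff_exists_image_eq.1 hM₂
    rw [← Set.image_comp, ← Set.image_comp]
    exact affineSpan_image_inter_inter_eq_empty_iff hp hq hsign

end TSP
end
end

section
/- Let d ≥ 2 and let P = conv{±e_1, …, ±e_d} ⊂ ℝ^d be the regular d-dimensional crosspolytope. An affine hyperplane H ⊂ ℝ^d is a split hyperplane of P if and only if H = {x ∈ ℝ^d : x_i = 0} for some i ∈ {1, …, d}. Moreover, any two distinct split hyperplanes of P intersect in the interior of P; in particular no two splits of P are compatible. -/
open scoped BigOperators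

noncomputable section

namespace TSP

/-!
Let `H = {x | f x = c}` be a hyperplane through an interior point of the crosspolytope. Some vertex
lies strictly on each side of `H`, and two vertices which are not antipodal are adjacent: `u + w`
exposes the edge `[u, w]`, as its inner product with a vertex `v` is `1` for `v = u, w` and
nonpositive otherwise. So if `H` is a split hyperplane, the vertices off `H` are a pair `u, -u`.
Since `d ≥ 2`, the hyperplane `H` contains another pair `v, -v`, hence the origin, and `f` is a
multiple of the inner product with `u`.

Conversely, a face with points strictly on both sides of `{x | ⟪u, x⟫ = 0}`, being the convex hull
of the vertices it contains, contains both `u` and `-u`. An affine functional attaining its maximum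
over a centrally symmetric polytope at two antipodal points is constant on the polytope, so the face
is the whole crosspolytope and not an edge.
-/

open scoped RealInnerProductSpace

section LevelSets

variable {K F : Type*} [Field K] [AddCommGroup F] [Module K F]
  {H : AffineSubspace K F} {p : F} {f : Module.Dual K F}

lemma direction_eq_ker_iff (hp : p ∈ H) :
    H.direction = LinearMap.ker f ↔ ∀ x, x ∈ H ↔ f x = f p := by
  have mem_iff (x : F) : x ∈ H ↔ x - p ∈ H.direction :=
    (AffineSubspace.vsub_right_mem_direction_iff_mem hp x).symm
  simp only [mem_iff, ← sub_eq_zero (b := f p), ← map_sub, ← LinearMap.mem_ker, SetLike.ext_iff]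
  exact ⟨fun h x => h (x - p), fun h y => by simpa using h (y + p)⟩

lemma finrank_direction_add_one_of_mem_iff [FiniteDimensional K F] (hp : p ∈ H) (hf : f ≠ 0)
    (hH : ∀ x, x ∈ H ↔ f x = f p) : Module.finrank K H.direction + 1 = Module.finrank K F := by
  rw [(direction_eq_ker_iff hp).2 hH, Module.Dual.finrank_ker_add_one_of_ne_zero hf]

lemma exists_dual_mem_iff_of_finrank_direction_add_one [FiniteDimensional K F] (hp : p ∈ H)
    (hH : Module.finrank K H.direction + 1 = Module.finrank K F) :
    ∃ f : Module.Dual K F, f ≠ 0 ∧ ∀ x, x ∈ H ↔ f x = f p := by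
  have direction_lt_top : H.direction < ⊤ :=
    Submodule.lt_top_of_finrank_lt_finrank (by lia)
  obtain ⟨f, hf, hle⟩ := Submodule.exists_le_ker_of_lt_top _ direction_lt_top
  have finrank_ker := Module.Dual.finrank_ker_add_one_of_ne_zero hf
  exact ⟨f, hf, (direction_eq_ker_iff hp).1 (Submodule.eq_of_le_of_finrank_eq hle (by lia))⟩

end LevelSets

section ConvexHull

variable {𝕜 F : Type*} [Field 𝕜] [LinearOrder 𝕜] [IsStrictOrderedRing 𝕜] [AddCommGroup F]
  [Module 𝕜 F] {V : Set F} {x : F}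

lemma exists_map_ge_of_mem_convexHull (a : F →ᵃ[𝕜] 𝕜) (hx : x ∈ convexHull 𝕜 V) :
    ∃ v ∈ V, a x ≤ a v :=
  ((convexOn_id convex_univ).comp_affineMap a).exists_ge_of_mem_convexHull (Set.subset_univ V) hx

lemma exists_map_le_of_mem_convexHull (a : F →ᵃ[𝕜] 𝕜) (hx : x ∈ convexHull 𝕜 V) :
    ∃ v ∈ V, a v ≤ a x :=
  ((concaveOn_id convex_univ).comp_affineMap a).exists_le_of_mem_convexHull (Set.subset_univ V) hx

lemma mem_convexHull_inter_of_forall_map_le {a : F →ᵃ[𝕜] 𝕜} {M : 𝕜} (ha : ∀ v ∈ V, a v ≤ M)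
    (hx : x ∈ convexHull 𝕜 V) (hax : M ≤ a x) : x ∈ convexHull 𝕜 (V ∩ {v | a v = M}) := by
  let C : Set F := {y | a y ≤ M ∧ (M ≤ a y → y ∈ convexHull 𝕜 (V ∩ {v | a v = M}))}
  have V_subset : V ⊆ C := fun v hv =>
    ⟨ha v hv, fun h => subset_convexHull 𝕜 _ ⟨hv, (ha v hv).antisymm h⟩⟩
  have C_convex : Convex 𝕜 C := by
    refine convex_iff_forall_pos.2 fun y hy z hz s t hs ht hst => ?_
    have map_combo : a (s • y + t • z) = s * a y + t * a z := Convex.combo_affine_apply hst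
    have hsy : s * a y ≤ s * M := by gcongr; exact hy.1
    have htz : t * a z ≤ t * M := by gcongr; exact hz.1
    have hM : s * M + t * M = M := by rw [← add_mul, hst, one_mul]
    refine ⟨by linarith, fun h => ?_⟩
    have hay : M ≤ a y := le_of_mul_le_mul_left (by linarith) hs
    have haz : M ≤ a z := le_of_mul_le_mul_left (by linarith) ht
    exact convex_convexHull 𝕜 _ (hy.2 hay) (hz.2 haz) hs.le ht.le hst
  exact (convexHull_min V_subset C_convex hx).2 hax

lemma ne_and_ne_and_mem_openSegment_iff {x y c : 𝕜} :
    x ≠ c ∧ y ≠ c ∧ c ∈ openSegment 𝕜 x y ↔ (x < c ∧ c < y) ∨ (y < c ∧ c < x) := by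
  rcases lt_trichotomy x y with hxy | rfl | hxy
  · rw [openSegment_eq_Ioo hxy, Set.mem_Ioo]
    grind
  · rw [openSegment_same, Set.mem_singleton_iff]
    grind
  · rw [openSegment_symm, openSegment_eq_Ioo hxy, Set.mem_Ioo]
    grind

end ConvexHull

section Interior

variable {F : Type*} [AddCommGroup F] [Module ℝ F] [TopologicalSpace F] [ContinuousAdd F]
  [ContinuousSMul ℝ F] {V : Set F} {p : F} {f : StrongDual ℝ F}

lemma exists_gt_of_mem_interior_convexHull (hf : f ≠ 0) (hp : p ∈ interior (convexHull ℝ V)) :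
    ∃ v ∈ V, f p < f v := by
  have image_mem_nhds := (f.isOpenMap_of_ne_zero hf _ isOpen_interior).mem_nhds ⟨p, hp, rfl⟩
  obtain ⟨_, hlt, y, hy, rfl⟩ := Filter.Eventually.exists_gt image_mem_nhds
  obtain ⟨v, hv, hyv⟩ := exists_map_ge_of_mem_convexHull f.toLinearMap.toAffineMap
    (interior_subset hy)
  exact ⟨v, hv, hlt.trans_le hyv⟩

lemma exists_lt_of_mem_interior_convexHull (hf : f ≠ 0) (hp : p ∈ interior (convexHull ℝ V)) :
    ∃ v ∈ V, f v < f p := by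
  simpa using exists_gt_of_mem_interior_convexHull (neg_ne_zero.2 hf) hp

end Interior

lemma intrinsicInterior_eq_interior {𝕜 W P : Type*} [Ring 𝕜] [AddCommGroup W] [Module 𝕜 W]
    [TopologicalSpace P] [AddTorsor W P] {s : Set P} (hspan : affineSpan 𝕜 s = ⊤) :
    intrinsicInterior 𝕜 s = interior s := by
  have span_open : IsOpen (affineSpan 𝕜 s : Set P) := by
    rw [hspan]
    exact isOpen_univ
  exact (interior_maximal intrinsicInterior_subset
    (span_open.isOpenMap_subtype_val _ isOpen_interior)).antisymm interior_subset_intrinsicInterior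

lemma affineSpan_eq_top_of_neg_eq {K F : Type*} [Ring K] [Invertible (2 : K)]
    [AddCommGroup F] [Module K F] {V : Set F} (hneg : -V = V) (hne : V.Nonempty)
    (hspan : Submodule.span K V = ⊤) : affineSpan K V = ⊤ := by
  obtain ⟨v, hv⟩ := hne
  have hv_neg : -v ∈ V := by rwa [← Set.mem_neg, hneg]
  have zero_mem : (0 : F) ∈ affineSpan K V := by
    rw [← midpoint_self_neg K v]
    exact AffineMap.lineMap_mem _ (subset_affineSpan K V hv) (subset_affineSpan K V hv_neg)
  refine SetLike.coe_injective ?_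
  rw [← affineSpan_insert_eq_affineSpan K zero_mem, affineSpan_insert_zero, hspan,
    Submodule.top_coe, AffineSubspace.top_coe]

lemma zero_mem_interior_convexHull_of_neg_eq {F : Type*} [NormedAddCommGroup F] [NormedSpace ℝ F]
    [FiniteDimensional ℝ F] {V : Set F} (hneg : -V = V) (hspan : affineSpan ℝ V = ⊤) :
    (0 : F) ∈ interior (convexHull ℝ V) := by
  obtain ⟨p, hp⟩ := interior_convexHull_nonempty_iff_affineSpan_eq_top.2 hspan
  have hp_neg : -p ∈ interior (convexHull ℝ V) := by
    have neg_interior : -interior (convexHull ℝ V) = interior (-convexHull ℝ V) :=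
      (Homeomorph.neg F).preimage_interior _
    rwa [← Set.mem_neg, neg_interior, ← convexHull_neg, hneg]
  rw [← midpoint_self_neg ℝ p]
  exact (convex_convexHull ℝ V).interior.midpoint_mem hp hp_neg

section Faces

variable {N : ℕ} {V F : Set (E N)}

lemma IsFaceOf.subset_convexHull_inter (hF : IsFaceOf V F) : F ⊆ convexHull ℝ (V ∩ F) := by
  obtain ⟨a, rfl⟩ := hF
  rintro x ⟨hx, hmax⟩
  have hV : ∀ v ∈ V, a v ≤ a x := fun v hv => hmax v (subset_convexHull ℝ V hv)
  refine convexHull_mono ?_ (mem_convexHull_inter_of_forall_map_le hV hx le_rfl)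
  exact fun v ⟨hv, hav⟩ => ⟨hv, subset_convexHull ℝ V hv, fun y hy => (hmax y hy).trans_eq hav.symm⟩

lemma isFaceOf_convexHull {W : Set (E N)} (hne : W.Nonempty) (hWV : W ⊆ V) (a : E N →ᵃ[ℝ] ℝ)
    {M : ℝ} (hW : ∀ v ∈ W, a v = M) (hlt : ∀ v ∈ V \ W, a v < M) :
    IsFaceOf V (convexHull ℝ W) := by
  obtain ⟨w, hw⟩ := hne
  have le_on_vertices : ∀ v ∈ V, a v ≤ M := fun v hv => by
    by_cases hvW : v ∈ W
    · exact (hW v hvW).le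
    · exact (hlt v ⟨hv, hvW⟩).le
  have V_inter_subset : V ∩ {v | a v = M} ⊆ W := fun v ⟨hv, hav⟩ =>
    by_contra fun hvW => (hlt v ⟨hv, hvW⟩).ne hav
  refine ⟨a, Set.Subset.antisymm (fun x hx => ⟨convexHull_mono hWV hx, fun y hy => ?_⟩) ?_⟩
  · obtain ⟨v, hv, hyv⟩ := exists_map_ge_of_mem_convexHull a hy
    obtain ⟨w', hw', hwx⟩ := exists_map_le_of_mem_convexHull a hx
    exact (hyv.trans (le_on_vertices v hv)).trans ((hW w' hw').symm.le.trans hwx)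
  · rintro x ⟨hx, hmax⟩
    have hMx : M ≤ a x := (hW w hw).symm.trans_le (hmax w (subset_convexHull ℝ V (hWV hw)))
    exact convexHull_mono V_inter_subset
      (mem_convexHull_inter_of_forall_map_le le_on_vertices hx hMx)

lemma IsFaceOf.eq_convexHull_of_mem_of_neg_mem (hF : IsFaceOf V F) (hneg : -V = V) {u : E N}
    (hu : u ∈ F) (hu_neg : -u ∈ F) : F = convexHull ℝ V := by
  obtain ⟨a, rfl⟩ := hF
  have map_add_map_neg (x : E N) : a x + a (-x) = 2 * a 0 := by
    rw [a.decomp]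
    simp only [Pi.add_apply, map_neg, map_zero]
    ring
  refine Set.Subset.antisymm (fun x hx => hx.1) fun x hx => ⟨hx, fun y hy => (hu.2 y hy).trans ?_⟩
  have hx_neg : -x ∈ convexHull ℝ V := by rwa [← Set.mem_neg, ← convexHull_neg, hneg]
  linarith [map_add_map_neg x, map_add_map_neg u, hu_neg.2 u hu.1, hu_neg.2 (-x) hx_neg]

lemma adim_convexHull (V : Set (E N)) : adim (convexHull ℝ V) = adim V := by
  rw [adim, affineSpan_convexHull, adim]

lemma adim_pair_le_one (x y : E N) : adim {x, y} ≤ 1 := by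
  rw [adim, direction_affineSpan]
  exact (collinear_pair ℝ x y).finrank_le_one

lemma neg_notMem_of_isFaceOf_convexHull_pair (hneg : -V = V) (hdim : 1 < adim V) {x y u : E N}
    (hface : IsFaceOf V (convexHull ℝ {x, y})) (hu : u ∈ convexHull ℝ {x, y}) :
    -u ∉ convexHull ℝ {x, y} := by
  intro hu_neg
  have face_eq := hface.eq_convexHull_of_mem_of_neg_mem hneg hu hu_neg
  have adim_eq : adim {x, y} = adim V := by rw [← adim_convexHull, face_eq, adim_convexHull]
  exact hdim.not_ge (adim_eq ▸ adim_pair_le_one x y)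

lemma strictlySeparates_iff {H : AffineSubspace ℝ (E N)} {f : Module.Dual ℝ (E N)} {c : ℝ}
    (hH : ∀ x, x ∈ H ↔ f x = c) {u w : E N} :
    StrictlySeparates H u w ↔ (f u < c ∧ c < f w) ∨ (f w < c ∧ c < f u) := by
  have meets_iff : (openSegment ℝ u w ∩ (H : Set (E N))).Nonempty ↔
      c ∈ openSegment ℝ (f u) (f w) := by
    have image_eq : f '' openSegment ℝ u w = openSegment ℝ (f u) (f w) :=
      image_openSegment ℝ f.toAffineMap u w
    rw [← image_eq]
    simp only [Set.Nonempty, Set.mem_inter_iff, SetLike.mem_coe, hH, Set.mem_image]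
  rw [StrictlySeparates, hH, hH, meets_iff, ne_and_ne_and_mem_openSegment_iff]

end Faces

section Crosspolytope

variable {d : ℕ} {u v w : E d}

lemma single_mem_crossVertices (i : Fin d) : EuclideanSpace.single i 1 ∈ crossVertices d :=
  ⟨i, Or.inl rfl⟩

lemma neg_crossVertices : -crossVertices d = crossVertices d := by
  ext v
  refine exists_congr fun i => ?_
  rw [neg_eq_iff_eq_neg, neg_inj, or_comm]

lemma neg_mem_crossVertices (hu : u ∈ crossVertices d) : -u ∈ crossVertices d := by
  rwa [← Set.mem_neg, neg_crossVertices]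

lemma norm_of_mem_crossVertices (hu : u ∈ crossVertices d) : ‖u‖ = 1 := by
  obtain ⟨i, rfl | rfl⟩ := hu <;> simp

lemma inner_eq_zero_of_mem_crossVertices (hu : u ∈ crossVertices d) (hv : v ∈ crossVertices d)
    (hne : v ≠ u) (hne_neg : v ≠ -u) : ⟪u, v⟫ = 0 := by
  obtain ⟨i, hu⟩ := hu
  obtain ⟨j, hv⟩ := hv
  have hij : i ≠ j := by
    rintro rfl
    rcases hu with rfl | rfl <;> rcases hv with rfl | rfl <;> simp at hne hne_neg
  rcases hu with rfl | rfl <;> rcases hv with rfl | rfl <;>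
    simp [EuclideanSpace.inner_single_left, hij]

lemma inner_nonpos_of_mem_crossVertices (hu : u ∈ crossVertices d) (hv : v ∈ crossVertices d)
    (hne : v ≠ u) : ⟪u, v⟫ ≤ 0 := by
  by_cases hne_neg : v = -u
  · simp [hne_neg]
  · exact (inner_eq_zero_of_mem_crossVertices hu hv hne hne_neg).le

lemma span_crossVertices : Submodule.span ℝ (crossVertices d) = ⊤ := by
  rw [eq_top_iff, ← (EuclideanSpace.basisFun (Fin d) ℝ).toBasis.span_eq]
  refine Submodule.span_mono ?_
  rintro _ ⟨i, rfl⟩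
  simpa using single_mem_crossVertices i

lemma affineSpan_crossVertices [NeZero d] : affineSpan ℝ (crossVertices d) = ⊤ :=
  affineSpan_eq_top_of_neg_eq neg_crossVertices ⟨_, single_mem_crossVertices 0⟩ span_crossVertices

lemma adim_crossVertices [NeZero d] : adim (crossVertices d) = d := by
  rw [adim, affineSpan_crossVertices, AffineSubspace.direction_top, finrank_top,
    finrank_euclideanSpace_fin]

lemma intrinsicInterior_crosspolytope [NeZero d] :
    intrinsicInterior ℝ (convexHull ℝ (crossVertices d)) =
      interior (convexHull ℝ (crossVertices d)) :=
  intrinsicInterior_eq_interior (by rw [affineSpan_convexHull, affineSpan_crossVertices])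

lemma zero_mem_intrinsicInterior_crosspolytope [NeZero d] :
    (0 : E d) ∈ intrinsicInterior ℝ (convexHull ℝ (crossVertices d)) := by
  rw [intrinsicInterior_crosspolytope]
  exact zero_mem_interior_convexHull_of_neg_eq neg_crossVertices affineSpan_crossVertices

lemma exists_mem_crossVertices_ne_ne_neg (hd : 2 ≤ d) (hu : u ∈ crossVertices d) :
    ∃ v ∈ crossVertices d, v ≠ u ∧ v ≠ -u := by
  have : Nontrivial (Fin d) := Fin.nontrivial_iff_two_le.2 hd
  obtain ⟨i, hu⟩ := hu
  obtain ⟨j, hji⟩ := exists_ne i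
  have apply_eq_zero : u j = 0 := by rcases hu with rfl | rfl <;> simp [hji]
  refine ⟨EuclideanSpace.single j 1, single_mem_crossVertices j, ?_, ?_⟩ <;>
  · intro h
    simpa [apply_eq_zero] using congrArg (· j) h

lemma isEdge_crossVertices (hu : u ∈ crossVertices d) (hw : w ∈ crossVertices d) (hne : w ≠ u)
    (hne_neg : w ≠ -u) : IsEdge (crossVertices d) u w := by
  have inner_uw : ⟪u, w⟫ = 0 := inner_eq_zero_of_mem_crossVertices hu hw hne hne_neg
  have inner_wu : ⟪w, u⟫ = 0 := (real_inner_comm u w).trans inner_uw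
  refine ⟨hne.symm, isFaceOf_convexHull (Set.insert_nonempty u {w}) (Set.pair_subset hu hw)
    (innerₗ (E d) (u + w)).toAffineMap (M := 1) ?_ ?_⟩
  · rintro v (rfl | rfl)
    · simp [norm_of_mem_crossVertices hu, inner_wu]
    · simp [norm_of_mem_crossVertices hw, inner_uw]
  · rintro v ⟨hv, hvuw⟩
    have inner_uv : ⟪u, v⟫ ≤ 0 :=
      inner_nonpos_of_mem_crossVertices hu hv fun h => hvuw (Or.inl h)
    have inner_wv : ⟪w, v⟫ ≤ 0 :=
      inner_nonpos_of_mem_crossVertices hw hv fun h => hvuw (Or.inr h)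
    simp only [LinearMap.coe_toAffineMap, innerₗ_apply_apply, inner_add_left]
    linarith

lemma mem_of_isFaceOf_crossVertices_of_inner_pos {F : Set (E d)}
    (hF : IsFaceOf (crossVertices d) F) (hu : u ∈ crossVertices d) {x : E d} (hx : x ∈ F)
    (hpos : 0 < ⟪u, x⟫) : u ∈ F := by
  obtain ⟨v, ⟨hv, hvF⟩, hle⟩ := exists_map_ge_of_mem_convexHull (innerₗ (E d) u).toAffineMap
    (hF.subset_convexHull_inter hx)
  have hv_pos : 0 < ⟪u, v⟫ := hpos.trans_le hle
  obtain rfl : v = u := by_contra fun hne =>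
    hv_pos.not_ge (inner_nonpos_of_mem_crossVertices hu hv hne)
  exact hvF

lemma not_isFaceOf_crossVertices_convexHull_pair (hd : 2 ≤ d) (hu : u ∈ crossVertices d)
    {x y : E d} (hx : ⟪u, x⟫ < 0) (hy : 0 < ⟪u, y⟫) :
    ¬ IsFaceOf (crossVertices d) (convexHull ℝ {x, y}) := by
  have : NeZero d := .of_gt hd
  intro hface
  have hu_mem : u ∈ convexHull ℝ {x, y} := mem_of_isFaceOf_crossVertices_of_inner_pos hface hu
    (subset_convexHull ℝ _ (Set.mem_insert_of_mem x rfl)) hy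
  have hu_neg_mem : -u ∈ convexHull ℝ {x, y} := mem_of_isFaceOf_crossVertices_of_inner_pos hface
    (neg_mem_crossVertices hu) (subset_convexHull ℝ _ (Set.mem_insert x {y}))
    (by rwa [inner_neg_left, neg_pos])
  exact neg_notMem_of_isFaceOf_convexHull_pair neg_crossVertices
    (by rwa [adim_crossVertices]) hface hu_mem hu_neg_mem

variable {H : AffineSubspace ℝ (E d)}

lemma isSplitHyperplane_of_mem_iff_inner_eq_zero (hd : 2 ≤ d) (hu : u ∈ crossVertices d)
    (hH : ∀ x, x ∈ H ↔ ⟪u, x⟫ = 0) : IsSplitHyperplane (crossVertices d) H := by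
  have : NeZero d := .of_gt hd
  have zero_mem : (0 : E d) ∈ H := (hH 0).2 (inner_zero_right u)
  have hf : innerₗ (E d) u ≠ 0 := fun h => by
    simpa [norm_of_mem_crossVertices hu] using LinearMap.congr_fun h u
  refine ⟨by simp [affineSpan_crossVertices], ?_,
    ⟨0, zero_mem, zero_mem_intrinsicInterior_crosspolytope⟩, fun x y hedge hsep => ?_⟩
  · rw [adim_crossVertices, finrank_direction_add_one_of_mem_iff zero_mem hf (by simpa using hH),
      finrank_euclideanSpace_fin]
  · rcases (strictlySeparates_iff (f := innerₗ (E d) u) hH).1 hsep with ⟨hx, hy⟩ | ⟨hy, hx⟩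
    · exact not_isFaceOf_crossVertices_convexHull_pair hd hu hx hy hedge.2
    · exact not_isFaceOf_crossVertices_convexHull_pair hd hu hy hx (Set.pair_comm x y ▸ hedge.2)

lemma exists_mem_crossVertices_lt_gt [NeZero d] {f : Module.Dual ℝ (E d)} (hf : f ≠ 0) {p : E d}
    (hp : p ∈ intrinsicInterior ℝ (convexHull ℝ (crossVertices d))) :
    (∃ u ∈ crossVertices d, f p < f u) ∧ ∃ w ∈ crossVertices d, f w < f p := by
  rw [intrinsicInterior_crosspolytope] at hp
  have hf' : f.toContinuousLinearMap ≠ 0 := by simpa using hf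
  exact ⟨exists_gt_of_mem_interior_convexHull hf' hp, exists_lt_of_mem_interior_convexHull hf' hp⟩

section Splits

variable {f : Module.Dual ℝ (E d)} {c : ℝ}

lemma eq_neg_of_map_lt_of_lt_map (hH : ∀ x, x ∈ H ↔ f x = c)
    (hsplit : ∀ u w, IsEdge (crossVertices d) u w → ¬ StrictlySeparates H u w)
    (hu : u ∈ crossVertices d) (hw : w ∈ crossVertices d) (hcu : c < f u) (hwc : f w < c) :
    w = -u := by
  by_contra hne_neg
  have hne : w ≠ u := by
    rintro rfl
    exact lt_asymm hcu hwc
  exact hsplit u w (isEdge_crossVertices hu hw hne hne_neg)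
    ((strictlySeparates_iff hH).2 (Or.inr ⟨hwc, hcu⟩))

lemma map_eq_of_ne_of_ne_neg (hH : ∀ x, x ∈ H ↔ f x = c)
    (hsplit : ∀ u w, IsEdge (crossVertices d) u w → ¬ StrictlySeparates H u w)
    (hu : u ∈ crossVertices d) (hcu : c < f u) (huc : f (-u) < c) (hv : v ∈ crossVertices d)
    (hne : v ≠ u) (hne_neg : v ≠ -u) : f v = c := by
  rcases lt_trichotomy (f v) c with hvc | hvc | hcv
  · exact absurd (eq_neg_of_map_lt_of_lt_map hH hsplit hu hv hcu hvc) hne_neg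
  · exact hvc
  · have neg_eq := eq_neg_of_map_lt_of_lt_map hH hsplit hv (neg_mem_crossVertices hu) hcv huc
    exact absurd (neg_injective neg_eq).symm hne

lemma eq_smul_innerₗ_of_forall_map_eq_zero (hu : u ∈ crossVertices d)
    (hf : ∀ v ∈ crossVertices d, v ≠ u → v ≠ -u → f v = 0) : f = f u • innerₗ (E d) u := by
  refine LinearMap.ext_on span_crossVertices fun v hv => ?_
  by_cases hne : v = u
  · simp [hne, norm_of_mem_crossVertices hu]
  by_cases hne_neg : v = -u
  · simp [hne_neg, norm_of_mem_crossVertices hu]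
  simp [hf v hv hne hne_neg, inner_eq_zero_of_mem_crossVertices hu hv hne hne_neg]

lemma exists_mem_iff_inner_eq_zero_of_isSplitHyperplane (hd : 2 ≤ d)
    (h : IsSplitHyperplane (crossVertices d) H) :
    ∃ u ∈ crossVertices d, ∀ x, x ∈ H ↔ ⟪u, x⟫ = 0 := by
  have : NeZero d := .of_gt hd
  obtain ⟨-, hdim, ⟨p, hpH, hp⟩, hsplit⟩ := h
  obtain ⟨f, hf, hH⟩ := exists_dual_mem_iff_of_finrank_direction_add_one hpH
    (by rw [hdim, adim_crossVertices, finrank_euclideanSpace_fin])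
  obtain ⟨⟨u, hu, hpu⟩, w, hw, hwp⟩ := exists_mem_crossVertices_lt_gt hf hp
  obtain rfl : w = -u := eq_neg_of_map_lt_of_lt_map hH hsplit hu hw hpu hwp
  have map_eq_zero : ∀ v ∈ crossVertices d, v ≠ u → v ≠ -u → f v = 0 ∧ f p = 0 := by
    intro v hv hne hne_neg
    have hfv := map_eq_of_ne_of_ne_neg hH hsplit hu hpu hwp hv hne hne_neg
    have hfv_neg := map_eq_of_ne_of_ne_neg hH hsplit hu hpu hwp (neg_mem_crossVertices hv)
      (by rwa [Ne, neg_eq_iff_eq_neg]) (by rwa [Ne, neg_inj])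
    rw [map_neg] at hfv_neg
    constructor <;> linarith
  have hfp : f p = 0 := by
    obtain ⟨v, hv, hne, hne_neg⟩ := exists_mem_crossVertices_ne_ne_neg hd hu
    exact (map_eq_zero v hv hne hne_neg).2
  have hfu : f u ≠ 0 := (hfp ▸ hpu).ne'
  have f_eq : f = f u • innerₗ (E d) u := eq_smul_innerₗ_of_forall_map_eq_zero hu
    fun v hv hne hne_neg => (map_eq_zero v hv hne hne_neg).1
  refine ⟨u, hu, fun x => ?_⟩
  rw [hH, hfp, f_eq, LinearMap.smul_apply, smul_eq_mul, innerₗ_apply_apply]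
  exact mul_eq_zero_iff_left hfu

end Splits

lemma isSplitHyperplane_crossVertices_iff (hd : 2 ≤ d) :
    IsSplitHyperplane (crossVertices d) H ↔
      ∃ u ∈ crossVertices d, ∀ x, x ∈ H ↔ ⟪u, x⟫ = 0 :=
  ⟨exists_mem_iff_inner_eq_zero_of_isSplitHyperplane hd,
    fun ⟨_, hu, hH⟩ => isSplitHyperplane_of_mem_iff_inner_eq_zero hd hu hH⟩

lemma exists_mem_iff_inner_eq_zero_iff_exists_coe_eq :
    (∃ u ∈ crossVertices d, ∀ x, x ∈ H ↔ ⟪u, x⟫ = 0) ↔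
      ∃ i : Fin d, (H : Set (E d)) = {x : E d | x i = 0} := by
  constructor
  · rintro ⟨_, ⟨i, rfl | rfl⟩, hH⟩ <;>
    exact ⟨i, Set.ext fun x => by simpa [EuclideanSpace.inner_single_left] using hH x⟩
  · rintro ⟨i, hH⟩
    refine ⟨_, single_mem_crossVertices i, fun x => ?_⟩
    simpa [EuclideanSpace.inner_single_left] using Set.ext_iff.1 hH x

lemma zero_mem_of_isSplitHyperplane (hd : 2 ≤ d) (h : IsSplitHyperplane (crossVertices d) H) :
    (0 : E d) ∈ H := by
  obtain ⟨u, -, hH⟩ := (isSplitHyperplane_crossVertices_iff hd).1 h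
  exact (hH 0).2 (inner_zero_right u)

end Crosspolytope

/-- The split hyperplanes of the regular `d`-crosspolytope are exactly
the coordinate hyperplanes, and any two distinct ones meet in the interior; hence no two
splits of the crosspolytope are compatible. -/
theorem crosspolytope_splits (d : ℕ) (hd : 2 ≤ d) :
    (∀ H : AffineSubspace ℝ (E d),
      (IsSplitHyperplane (crossVertices d) H ↔
        ∃ i : Fin d, (H : Set (E d)) = {x : E d | x i = 0})) ∧
    (∀ H₁ H₂ : AffineSubspace ℝ (E d),
      IsSplitHyperplane (crossVertices d) H₁ → IsSplitHyperplane (crossVertices d) H₂ →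
      H₁ ≠ H₂ →
      ((H₁ : Set (E d)) ∩ (H₂ : Set (E d)) ∩
        intrinsicInterior ℝ (convexHull ℝ (crossVertices d))).Nonempty) := by
  have : NeZero d := .of_gt hd
  refine ⟨fun H => ?_, fun H₁ H₂ h₁ h₂ _ => ⟨0, ⟨?_, ?_⟩, ?_⟩⟩
  · exact (isSplitHyperplane_crossVertices_iff hd).trans
      exists_mem_iff_inner_eq_zero_iff_exists_coe_eq
  · exact zero_mem_of_isSplitHyperplane hd h₁
  · exact zero_mem_of_isSplitHyperplane hd h₂
  · exact zero_mem_intrinsicInterior_crosspolytope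

end TSP
end
end
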